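/- arXiv:math/0401229 — 2 statements merged into one kernel-verified Lean document; each statement's English description precedes it below -/
import Mathlib

section
/- Let N be a positive integer and let x_1,…,x_N and y_1,…,y_N be real numbers in [0,1). Then the family (s_λ(x_1,…,x_N)·s_λ(y_1,…,y_N)), indexed by all Young diagrams λ with at most N rows, is summable, and its sum equals ∏_{i=1}^N ∏_{j=1}^N 1/(1 − x_i y_j) (Cauchy identity). -/
/-- A semistandard Young tableau of shape `lam` (a Young diagram with at most `N` rows,
given as a nonincreasing function `Fin N → ℕ`), with entries in `Fin N` (representing
the integers `1, …, N`).  `entry i j` is the entry in row `i` and column `j` (0-indexed);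
rows are weakly increasing, columns are strictly increasing, and entries outside of the
shape are normalized to `0`. -/
structure SSYT (N : ℕ) (lam : Fin N → ℕ) where
  entry : Fin N → ℕ → Fin N
  rowWeak : ∀ (i : Fin N) (j1 j2 : ℕ), j1 ≤ j2 → j2 < lam i → entry i j1 ≤ entry i j2
  colStrict : ∀ (i1 i2 : Fin N), i1 < i2 → ∀ j : ℕ, j < lam i2 → entry i1 j < entry i2 j
  zeroOutside : ∀ (i : Fin N) (j : ℕ), lam i ≤ j → (entry i j : ℕ) = 0

/-- The content of a semistandard Young tableau: `content T k` is the number of cells of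
`T` whose entry equals `k`. -/
noncomputable def SSYT.content {N : ℕ} {lam : Fin N → ℕ} (T : SSYT N lam) (k : Fin N) : ℕ :=
  ∑ i : Fin N, ((Finset.range (lam i)).filter (fun j => T.entry i j = k)).card

/-- The Schur polynomial `s_lam (x 0, …, x (N-1))`, defined as the sum over all semistandard
Young tableaux `T` of shape `lam` with entries in `{1, …, N}` of the monomial
`∏ k, (x k) ^ (number of entries of T equal to k)`. -/
noncomputable def schur {R : Type*} [CommRing R] [TopologicalSpace R] (N : ℕ)
    (lam : Fin N → ℕ) (x : Fin N → R) : R :=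
  ∑' T : SSYT N lam, ∏ k : Fin N, x k ^ T.content k

namespace CauchyAux

open scoped ENNReal

lemma tsum_cons (n : ℕ) (f : (Fin (n+1) → ℕ) → ℝ≥0∞) :
    ∑' l, f l = ∑' a : ℕ, ∑' t : Fin n → ℕ, f (Fin.cons a t) := by
  rw [← (Fin.consEquiv (fun _ : Fin (n+1) => ℕ)).tsum_eq, ENNReal.tsum_prod']
  rfl

lemma tsum_snoc {α : Type*} (n : ℕ) (f : (Fin (n+1) → α) → ℝ≥0∞) :
    ∑' l, f l = ∑' a : α, ∑' t : Fin n → α, f (Fin.snoc (α := fun _ => α) t a) := by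
  rw [← (Fin.snocEquiv (fun _ : Fin (n+1) => α)).tsum_eq, ENNReal.tsum_prod']
  rfl

lemma tsum_pi (n : ℕ) (c : Fin n → ℕ → ℝ≥0∞) :
    ∑' l : Fin n → ℕ, ∏ i, c i (l i) = ∏ i, ∑' k, c i k := by
  induction n with
  | zero => simp
  | succ n ih =>
    rw [tsum_cons]
    simp only [Fin.prod_univ_succ, Fin.cons_zero, Fin.cons_succ]
    simp only [ENNReal.tsum_mul_left, ENNReal.tsum_mul_right]
    rw [ih (fun i => c i.succ)]

lemma tsum_first (n : ℕ) (a : ℕ → ℝ≥0∞) (c : Fin n → ℕ → ℝ≥0∞) :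
    ∑' l : Fin (n+1) → ℕ, a (l 0) * ∏ i : Fin n, c i (l i.succ) = (∑' k, a k) * ∏ i, ∑' k, c i k := by
  rw [tsum_cons]
  simp only [Fin.cons_zero, Fin.cons_succ, ENNReal.tsum_mul_left, ENNReal.tsum_mul_right, tsum_pi]

lemma tsum_last (n : ℕ) (a : ℕ → ℝ≥0∞) (c : Fin n → ℕ → ℝ≥0∞) :
    ∑' l : Fin (n+1) → ℕ, a (l (Fin.last n)) * ∏ i : Fin n, c i (l i.castSucc)
      = (∑' k, a k) * ∏ i, ∑' k, c i k := by
  rw [tsum_snoc]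
  simp only [Fin.snoc_last, Fin.snoc_castSucc, ENNReal.tsum_mul_left, ENNReal.tsum_mul_right, tsum_pi]

/-- guarded power -/
noncomputable def gp (x : ℝ≥0∞) (a b : ℕ) : ℝ≥0∞ := if a ≤ b then x ^ (b - a) else 0

/-- guard -/
noncomputable def gd (a b : ℕ) : ℝ≥0∞ := if a ≤ b then 1 else 0

noncomputable def W {n : ℕ} (x : ℝ≥0∞) (mu la : Fin (n+1) → ℕ) : ℝ≥0∞ :=
  (∏ i, gp x (mu i) (la i)) * ∏ i : Fin n, gd (la i.succ) (mu i.castSucc)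

lemma top_sum (x y : ℝ≥0∞) (a b : ℕ) :
    ∑' l, gp y a l * gp x b l = x ^ (a - b) * y ^ (b - a) * (1 - x * y)⁻¹ := by
  rw [← ENNReal.tsum_geometric, ← ENNReal.tsum_mul_left]
  have hinj : Function.Injective (fun t : ℕ => max a b + t) := fun s t h => by simpa using h
  rw [← hinj.tsum_eq (f := fun l => gp y a l * gp x b l)]
  · congr 1; ext t
    have h1 : a ≤ max a b + t := by omega
    have h2 : b ≤ max a b + t := by omega
    simp only [gp, h1, h2, if_true]
    rw [show max a b + t - a = (b - a) + t by omega, show max a b + t - b = (a - b) + t by omega]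
    rw [pow_add, pow_add, mul_pow]; ring
  · intro l hl
    simp only [gp, Function.mem_support] at hl
    by_cases h1 : a ≤ l
    · by_cases h2 : b ≤ l
      · exact ⟨l - max a b, by simp only []; omega⟩
      · simp [h2] at hl
    · simp [h1] at hl

lemma int_sum1 (x y : ℝ≥0∞) (a b c d : ℕ) :
    ∑' l, (gp y a l * gp x b l) * (gd l c * gd l d)
      = x ^ (a - b) * y ^ (b - a) * ∑ t ∈ Finset.range (min c d + 1 - max a b), (x * y) ^ t := by
  rw [tsum_eq_sum (s := Finset.Icc (max a b) (min c d))]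
  · rw [Finset.mul_sum]
    refine Finset.sum_nbij' (fun l => l - max a b) (fun t => max a b + t) ?_ ?_ ?_ ?_ ?_
    · intro l hl; simp only [Finset.mem_Icc, Finset.mem_range] at *; omega
    · intro l hl; simp only [Finset.mem_Icc, Finset.mem_range] at *; omega
    · intro l hl; simp only [Finset.mem_Icc, Finset.mem_range] at *; omega
    · intro l hl; simp only [Finset.mem_range] at *; omega
    · intro l hl
      simp only [Finset.mem_Icc] at hl
      have h1 : a ≤ l := by omega
      have h2 : b ≤ l := by omega
      have h3 : l ≤ c := by omega
      have h4 : l ≤ d := by omega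
      simp only [gp, gd, h1, h2, h3, h4, if_true]
      rw [show l - a = (b - a) + (l - max a b) by omega, show l - b = (a - b) + (l - max a b) by omega]
      rw [pow_add, pow_add, mul_pow]; ring
  · intro l hl
    by_contra h
    apply hl
    simp only [gp, gd, mul_eq_zero, not_or, ite_eq_right_iff, not_forall] at h
    obtain ⟨⟨⟨h1, _⟩, ⟨h2, _⟩⟩, ⟨h3, _⟩, ⟨h4, _⟩⟩ := h
    simp only [Finset.mem_Icc]; omega

lemma int_sum2 (x y : ℝ≥0∞) (a b c d : ℕ) :
    ∑' l, (gp x l c * gp y l d) * (gd a l * gd b l)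
      = x ^ (c - d) * y ^ (d - c) * ∑ t ∈ Finset.range (min c d + 1 - max a b), (x * y) ^ t := by
  rw [tsum_eq_sum (s := Finset.Icc (max a b) (min c d))]
  · rw [Finset.mul_sum]
    refine Finset.sum_nbij' (fun l => min c d - l) (fun t => min c d - t) ?_ ?_ ?_ ?_ ?_
    · intro l hl; simp only [Finset.mem_Icc, Finset.mem_range] at *; omega
    · intro l hl; simp only [Finset.mem_Icc, Finset.mem_range] at *; omega
    · intro l hl; simp only [Finset.mem_Icc] at *; omega
    · intro l hl; simp only [Finset.mem_range] at *; omega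
    · intro l hl
      simp only [Finset.mem_Icc] at hl
      have h1 : a ≤ l := by omega
      have h2 : b ≤ l := by omega
      have h3 : l ≤ c := by omega
      have h4 : l ≤ d := by omega
      simp only [gp, gd, h1, h2, h3, h4, if_true]
      rw [show c - l = (c - d) + (min c d - l) by omega, show d - l = (d - c) + (min c d - l) by omega]
      rw [pow_add, pow_add, mul_pow]; ring
  · intro l hl
    by_contra h
    apply hl
    simp only [gp, gd, mul_eq_zero, not_or, ite_eq_right_iff, not_forall] at h
    obtain ⟨⟨⟨h1, _⟩, ⟨h2, _⟩⟩, ⟨h3, _⟩, ⟨h4, _⟩⟩ := h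
    simp only [Finset.mem_Icc]; omega

lemma last_sum (x y : ℝ≥0∞) (c : ℕ) :
    ∑' l, (gp x l c * gp y l 0) = x ^ (c - 0) * y ^ (0 - c) := by
  rw [tsum_eq_single 0]
  · simp [gp]
  · intro l hl; simp [gp, hl]

lemma comm {n : ℕ} (x y : ℝ≥0∞) (mu nu : Fin (n+1) → ℕ) (h : nu (Fin.last n) = 0) :
    ∑' la, W y mu la * W x nu la = (1 - x * y)⁻¹ * ∑' ka, W x ka mu * W y ka nu := by
  have e1 : ∀ la : Fin (n+1) → ℕ, W y mu la * W x nu la =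
      (fun l => gp y (mu 0) l * gp x (nu 0) l) (la 0) *
      ∏ i : Fin n, (fun (i : Fin n) l => (gp y (mu i.succ) l * gp x (nu i.succ) l) *
        (gd l (mu i.castSucc) * gd l (nu i.castSucc))) i (la i.succ) := by
    intro la
    simp only [W, Fin.prod_univ_succ (n := n), Finset.prod_mul_distrib]
    ring
  have e2 : ∀ ka : Fin (n+1) → ℕ, W x ka mu * W y ka nu =
      (fun l => gp x l (mu (Fin.last n)) * gp y l (nu (Fin.last n))) (ka (Fin.last n)) *
      ∏ i : Fin n, (fun (i : Fin n) l => (gp x l (mu i.castSucc) * gp y l (nu i.castSucc)) *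
        (gd (mu i.succ) l * gd (nu i.succ) l)) i (ka i.castSucc) := by
    intro la
    simp only [W, Fin.prod_univ_castSucc (n := n), Finset.prod_mul_distrib]
    ring
  rw [(tsum_congr e1).trans (tsum_first n (fun l => gp y (mu 0) l * gp x (nu 0) l)
    (fun (i : Fin n) l => (gp y (mu i.succ) l * gp x (nu i.succ) l) *
        (gd l (mu i.castSucc) * gd l (nu i.castSucc)))), (tsum_congr e2).trans (tsum_last n
    (fun l => gp x l (mu (Fin.last n)) * gp y l (nu (Fin.last n)))
    (fun (i : Fin n) l => (gp x l (mu i.castSucc) * gp y l (nu i.castSucc)) *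
        (gd (mu i.succ) l * gd (nu i.succ) l)))]
  simp only [top_sum, int_sum1, int_sum2, h, last_sum]
  have e3 := (Fin.prod_univ_succ (fun i => x ^ (mu i - nu i) * y ^ (nu i - mu i))).symm.trans
    (Fin.prod_univ_castSucc (fun i => x ^ (mu i - nu i) * y ^ (nu i - mu i)))
  rw [h] at e3
  simp only [Finset.prod_mul_distrib] at e3 ⊢
  calc _ = (x ^ (mu 0 - nu 0) * y ^ (nu 0 - mu 0) * ((∏ i : Fin n, x ^ (mu i.succ - nu i.succ)) * ∏ i : Fin n, y ^ (nu i.succ - mu i.succ))) *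
      ((1 - x * y)⁻¹ * (∏ i : Fin n, ∑ t ∈ Finset.range (min (mu i.castSucc) (nu i.castSucc) + 1 - max (mu i.succ) (nu i.succ)), (x * y) ^ t)) := by ring
    _ = _ := by rw [e3]; ring

lemma W_ne {n : ℕ} {x : ℝ≥0∞} {mu la : Fin (n+1) → ℕ} (h : W x mu la ≠ 0) :
    (∀ i, mu i ≤ la i) ∧ ∀ i : Fin n, la i.succ ≤ mu i.castSucc := by
  simp only [W, mul_ne_zero_iff, Finset.prod_ne_zero_iff, gp, gd] at h
  constructor
  · intro i; by_contra hh; exact h.1 i (Finset.mem_univ _) (by simp [hh])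
  · intro i; by_contra hh; exact h.2 i (Finset.mem_univ _) (by simp [hh])

lemma W_eq {n : ℕ} {x : ℝ≥0∞} {mu la : Fin (n+1) → ℕ} (h1 : ∀ i, mu i ≤ la i)
    (h2 : ∀ i : Fin n, la i.succ ≤ mu i.castSucc) : W x mu la = x ^ (∑ i, (la i - mu i)) := by
  simp [W, gp, gd, h1, h2, Finset.prod_pow_eq_pow_sum]

noncomputable def h {n : ℕ} (x : ℕ → ℝ≥0∞) : ℕ → (Fin (n+1) → ℕ) → ℝ≥0∞
  | 0, la => if la = 0 then 1 else 0
  | k+1, la => ∑' mu, W (x k) mu la * h x k mu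

lemma h_supp {n : ℕ} (x : ℕ → ℝ≥0∞) (k : ℕ) (la : Fin (n+1) → ℕ) (hh : h x k la ≠ 0) :
    ∀ i : Fin (n+1), k ≤ i → la i = 0 := by
  induction k generalizing la with
  | zero =>
    intro i _
    simp only [h] at hh
    by_cases h0 : la = 0
    · simp [h0]
    · simp [h0] at hh
  | succ k ih =>
    intro i hi
    simp only [h, ne_eq, ENNReal.tsum_eq_zero, not_forall] at hh
    obtain ⟨mu, hm⟩ := hh
    rw [mul_eq_zero, not_or] at hm
    have h1 := W_ne hm.1
    obtain ⟨j, rfl⟩ := Fin.exists_succ_eq.2 (show i ≠ 0 by rintro rfl; simp at hi)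
    have h2 := h1.2 j
    rw [ih mu hm.2 j.castSucc (by simpa using hi)] at h2
    omega

lemma D_lem {n : ℕ} (x : ℕ → ℝ≥0∞) (y : ℝ≥0∞) (k : ℕ) (hk : k ≤ n+1) (mu : Fin (n+1) → ℕ) :
    ∑' la, W y mu la * h x k la = (∏ m ∈ Finset.range k, (1 - x m * y)⁻¹) * h x k mu := by
  induction k generalizing mu with
  | zero =>
    rw [tsum_eq_single 0]
    · by_cases h0 : mu = 0
      · subst h0; simp [h, W, gp, gd]
      · simp only [h, h0, if_true, if_false, mul_zero, mul_one]
        by_contra hc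
        exact h0 (funext fun i => by simpa using (W_ne hc).1 i)
    · intro la hla; simp [h, hla]
  | succ k ih =>
    simp only [h, ← ENNReal.tsum_mul_left]
    rw [ENNReal.tsum_comm]
    have e : ∀ nu : Fin (n+1) → ℕ, ∑' la, W y mu la * (W (x k) nu la * h x k nu) =
        (1 - x k * y)⁻¹ * ∑' ka, W (x k) ka mu * (W y ka nu * h x k nu) := by
      intro nu
      by_cases hz : h x k nu = 0
      · simp [hz]
      · have := comm (x k) y mu nu (h_supp x k nu hz _ (by simpa using hk))
        simp only [← mul_assoc, ENNReal.tsum_mul_right, this]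
    simp only [e, ENNReal.tsum_mul_left]
    rw [ENNReal.tsum_comm]
    simp only [ENNReal.tsum_mul_left, ih (by omega)]
    rw [Finset.prod_range_succ, ← ENNReal.tsum_mul_left, ← ENNReal.tsum_mul_left]
    congr 1; ext ka; ring

lemma h_zero {n : ℕ} (x : ℕ → ℝ≥0∞) (k : ℕ) : h x k (0 : Fin (n+1) → ℕ) = 1 := by
  induction k with
  | zero => simp [h]
  | succ k ih =>
    simp only [h]
    rw [tsum_eq_single 0, ih]
    · simp [W, gp, gd]
    · intro mu hmu
      by_contra hc
      exact hmu (funext fun i => by simpa using (W_ne (left_ne_zero_of_mul hc)).1 i)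

lemma cauchyE {n : ℕ} (x y : ℕ → ℝ≥0∞) (k : ℕ) :
    ∑' la : Fin (n+1) → ℕ, h x (n+1) la * h y k la =
      ∏ j ∈ Finset.range k, ∏ i ∈ Finset.range (n+1), (1 - x i * y j)⁻¹ := by
  induction k with
  | zero =>
    rw [tsum_eq_single 0]
    · simp [h_zero]
    · intro la hla; simp [h, hla]
  | succ k ih =>
    rw [Finset.prod_range_succ, ← ih]
    simp only [h.eq_2 y, ← ENNReal.tsum_mul_left]
    rw [ENNReal.tsum_comm, ← ENNReal.tsum_mul_right]
    congr 1; ext mu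
    have := D_lem x (y k) (n+1) le_rfl mu
    calc _ = ∑' la, h y k mu * (W (y k) mu la * h x (n+1) la) := by congr 1; ext la; ring
      _ = _ := by rw [ENNReal.tsum_mul_left, this]; ring

noncomputable def ch {n : ℕ} (x : ℕ → ℝ≥0∞) (k : ℕ) (G : Fin (k+1) → Fin (n+1) → ℕ) : ℝ≥0∞ :=
  (if G 0 = 0 then 1 else 0) * ∏ m : Fin k, W (x m) (G m.castSucc) (G m.succ)

lemma h_chain {n : ℕ} (x : ℕ → ℝ≥0∞) (k : ℕ) (la : Fin (n+1) → ℕ) :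
    h x k la = ∑' g : Fin k → Fin (n+1) → ℕ,
      ch x k (Fin.snoc (α := fun _ => Fin (n+1) → ℕ) g la) := by
  induction k generalizing la with
  | zero => simp [h, ch, Fin.snoc]
  | succ k ih =>
    rw [tsum_snoc]
    simp only [h]
    congr 1; ext mu
    rw [ih, ← ENNReal.tsum_mul_left]
    congr 1; ext g
    simp only [ch]
    rw [Fin.prod_univ_castSucc (n := k)]
    simp only [Fin.succ_castSucc, Fin.snoc_castSucc, Fin.succ_last, Fin.snoc_last, Fin.val_castSucc,
      Fin.val_last]
    have e0 : Fin.snoc (α := fun _ => Fin (n+1) → ℕ)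
        (Fin.snoc (α := fun _ => Fin (n+1) → ℕ) g mu) la 0 =
        Fin.snoc (α := fun _ => Fin (n+1) → ℕ) g mu 0 :=
      Fin.snoc_castSucc (α := fun _ => Fin (n+1) → ℕ) (i := (0 : Fin (k+1))) (x := la)
        (p := Fin.snoc (α := fun _ => Fin (n+1) → ℕ) g mu)
    rw [e0]
    ring

lemma card_filter_lower (L : ℕ) (p : ℕ → Prop) [DecidablePred p]
    (hp : ∀ j1 j2, j1 ≤ j2 → j2 < L → p j2 → p j1) (j : ℕ) :
    j < ((Finset.range L).filter p).card ↔ j < L ∧ p j := by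
  induction L with
  | zero => simp
  | succ L ih =>
    by_cases hL : p L
    · have : (Finset.range (L+1)).filter p = Finset.range (L+1) := by
        apply Finset.filter_true_of_mem
        intro i hi
        exact hp i L (by simp at hi; omega) (by omega) hL
      rw [this, Finset.card_range]
      exact ⟨fun hj => ⟨hj, hp j L (by omega) (by omega) hL⟩, fun hj => hj.1⟩
    · rw [Finset.range_add_one, Finset.filter_insert, if_neg hL,
        ih (fun j1 j2 a b c => hp j1 j2 a (by omega) c)]
      constructor
      · rintro ⟨a, b⟩; exact ⟨by omega, b⟩
      · rintro ⟨a, b⟩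
        refine ⟨?_, b⟩
        rcases Nat.lt_succ_iff_lt_or_eq.1 a with a | rfl
        · exact a
        · exact absurd b hL

def cnt {N : ℕ} {la : Fin N → ℕ} (T : SSYT N la) (m : ℕ) (i : Fin N) : ℕ :=
  ((Finset.range (la i)).filter (fun j => (T.entry i j : ℕ) < m)).card

lemma lt_cnt {N : ℕ} {la : Fin N → ℕ} (T : SSYT N la) (m : ℕ) (i : Fin N) (j : ℕ) :
    j < cnt T m i ↔ j < la i ∧ (T.entry i j : ℕ) < m := by
  apply card_filter_lower
  intro j1 j2 h12 h2 h3
  have := T.rowWeak i j1 j2 h12 h2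
  rw [Fin.le_def] at this
  omega

lemma cnt_zero {N : ℕ} {la : Fin N → ℕ} (T : SSYT N la) : cnt T 0 = 0 := by
  ext i; simp [cnt]

lemma cnt_top {N : ℕ} {la : Fin N → ℕ} (T : SSYT N la) : cnt T N = la := by
  ext i; simp [cnt]

lemma cnt_mono {N : ℕ} {la : Fin N → ℕ} (T : SSYT N la) (m : ℕ) (i : Fin N) :
    cnt T m i ≤ cnt T (m+1) i := by
  by_contra! hc
  have h1 := (lt_cnt T m i _).1 hc
  have := (lt_cnt T (m+1) i _).2 ⟨h1.1, by omega⟩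
  omega

lemma cnt_inter {N : ℕ} {la : Fin N → ℕ} (hla : Antitone la) (T : SSYT N la) (m : ℕ) (i1 i2 : Fin N)
    (hi : i1 < i2) : cnt T (m+1) i2 ≤ cnt T m i1 := by
  by_contra! hc
  have h1 := (lt_cnt T (m+1) i2 _).1 hc
  have h2 := T.colStrict i1 i2 hi _ h1.1
  rw [Fin.lt_def] at h2
  have := (lt_cnt T m i1 _).2 ⟨lt_of_lt_of_le h1.1 (hla hi.le), by omega⟩
  omega

lemma content_eq {N : ℕ} {la : Fin N → ℕ} (T : SSYT N la) (m : Fin N) :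
    T.content m = ∑ i, (cnt T (m+1) i - cnt T m i) := by
  unfold SSYT.content
  refine Finset.sum_congr rfl fun i _ => ?_
  have : cnt T (m+1) i = cnt T m i + ((Finset.range (la i)).filter (fun j => T.entry i j = m)).card := by
    unfold cnt
    rw [← Finset.card_union_of_disjoint]
    · congr 1; ext j
      simp only [Finset.mem_filter, Finset.mem_union, Fin.ext_iff]
      constructor
      · rintro ⟨a, b⟩
        rcases Nat.lt_succ_iff_lt_or_eq.1 b with b | b
        · exact Or.inl ⟨a, b⟩
        · exact Or.inr ⟨a, b⟩
      · rintro (⟨a, b⟩ | ⟨a, b⟩) <;> exact ⟨a, by omega⟩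
    · rw [Finset.disjoint_left]
      intro j h1 h2
      simp only [Finset.mem_filter, Fin.ext_iff] at h1 h2
      omega
  omega

lemma ssyt_ext {N : ℕ} {la : Fin N → ℕ} (T T' : SSYT N la)
    (hh : ∀ i j, j < la i → T.entry i j = T'.entry i j) : T = T' := by
  have : T.entry = T'.entry := by
    ext i j
    by_cases hj : j < la i
    · rw [hh i j hj]
    · rw [T.zeroOutside i j (by omega), T'.zeroOutside i j (by omega)]
  cases T; cases T'; simp only at this; subst this; rfl

lemma cnt_inj {N : ℕ} {la : Fin N → ℕ} (T T' : SSYT N la)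
    (hh : ∀ m < N, cnt T m = cnt T' m) : T = T' := by
  apply ssyt_ext
  intro i j hj
  have key : ∀ m < N, (T.entry i j : ℕ) < m ↔ (T'.entry i j : ℕ) < m := by
    intro m hm
    have h1 := lt_cnt T m i j
    have h2 := lt_cnt T' m i j
    rw [hh m hm, h2] at h1
    tauto
  ext
  rcases lt_trichotomy (T.entry i j : ℕ) (T'.entry i j) with h1 | h1 | h1
  · have := (key _ (T'.entry i j).2).1 h1; omega
  · exact h1
  · have := (key _ (T.entry i j).2).2 h1; omega

/-- Every interlacing chain comes from a tableau. -/
lemma exists_T {n : ℕ} (la : Fin (n+1) → ℕ) (G : ℕ → Fin (n+1) → ℕ) (h0 : G 0 = 0)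
    (hN : G (n+1) = la) (h1 : ∀ m < n+1, ∀ i, G m i ≤ G (m+1) i)
    (h2 : ∀ m < n+1, ∀ i : Fin n, G (m+1) i.succ ≤ G m i.castSucc) :
    ∃ T : SSYT (n+1) la, ∀ m ≤ n+1, cnt T m = G m := by
  have hmono : ∀ m' ≤ n+1, ∀ m ≤ m', ∀ i, G m i ≤ G m' i := by
    intro m' 
    induction m' with
    | zero => intro _ m hm i; rw [Nat.le_zero.1 hm]
    | succ k ih =>
      intro hk m hm i
      rcases Nat.le_succ_iff.1 hm with hm | rfl
      · exact (ih (by omega) m hm i).trans (h1 k (by omega) i)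
      · rfl
  have hanti : ∀ m ≤ n+1, Antitone (G m) := by
    intro m hm
    rw [Fin.antitone_iff_succ_le]
    intro i
    rcases m with _ | m
    · simp [h0]
    · exact (h2 m (by omega) i).trans (h1 m (by omega) _)
  have h2' : ∀ m < n+1, ∀ i1 i2 : Fin (n+1), i1 < i2 → G (m+1) i2 ≤ G m i1 := by
    intro m hm i1 i2 hi
    obtain ⟨j, rfl⟩ := Fin.exists_succ_eq.2 (show i2 ≠ 0 by rintro rfl; simp at hi)
    exact (h2 m hm j).trans (hanti m (by omega) (Fin.le_castSucc_iff.2 hi))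
  have hex : ∀ i j, ∃ e : Fin (n+1), (j < la i → ∀ m ≤ n+1, ((e : ℕ) < m ↔ j < G m i)) ∧
      (la i ≤ j → (e : ℕ) = 0) := by
    intro i j
    by_cases hj : j < la i
    · have hE : ∃ m, j < G (m+1) i := ⟨n, by rw [hN]; exact hj⟩
      classical
      have hle : Nat.find hE ≤ n := Nat.find_min' hE (by rw [hN]; exact hj)
      refine ⟨⟨Nat.find hE, by omega⟩, fun _ m hm => ?_, fun hc => by omega⟩
      constructor
      · intro hlt
        exact (Nat.find_spec hE).trans_le (hmono m hm _ hlt i)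
      · intro hlt
        rcases m with _ | m
        · simp [h0] at hlt
        · exact Nat.lt_succ_of_le (Nat.find_min' hE hlt)
    · exact ⟨0, fun hc => absurd hc hj, fun _ => rfl⟩
  choose e he1 he2 using hex
  refine ⟨⟨e, ?_, ?_, he2⟩, ?_⟩
  · intro i j1 j2 h12 hj2
    rw [Fin.le_def]
    by_contra! hc
    have ha := (he1 i j2 hj2 _ (by have := (e i j1).2; omega)).1 hc
    have hb := (he1 i j1 (by omega) _ (by have := (e i j1).2; omega)).2 (lt_of_le_of_lt h12 ha)
    omega
  · intro i1 i2 hi j hj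
    rw [Fin.lt_def]
    have ha := (he1 i2 j hj (e i2 j + 1) (by have := (e i2 j).2; omega)).1 (by omega)
    have hb := ha.trans_le (h2' _ (e i2 j).2 i1 i2 hi)
    have hj1 : j < la i1 := by
      have := hanti (n+1) le_rfl hi.le
      rw [hN] at this
      omega
    exact (he1 i1 j hj1 _ (by have := (e i2 j).2; omega)).2 hb
  · intro m hm
    ext i
    apply eq_of_forall_lt_iff
    intro j
    rw [lt_cnt]
    constructor
    · rintro ⟨a, b⟩; exact (he1 i j a m hm).1 b
    · intro hj
      have : j < la i := by
        have := hmono (n+1) le_rfl m hm i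
        rw [hN] at this; omega
      exact ⟨this, (he1 i j this m hm).2 hj⟩

lemma snoc_cnt {n : ℕ} {la : Fin (n+1) → ℕ} (T : SSYT (n+1) la) :
    Fin.snoc (α := fun _ => Fin (n+1) → ℕ) (fun m : Fin (n+1) => cnt T m) la =
      fun m : Fin (n+2) => cnt T m := by
  ext m : 1
  refine Fin.lastCases ?_ (fun m => ?_) m
  · simp [cnt_top]
  · simp

lemma schurE {n : ℕ} (x : ℕ → ℝ≥0∞) (la : Fin (n+1) → ℕ) (hla : Antitone la) :
    ∑' T : SSYT (n+1) la, ∏ k : Fin (n+1), x k ^ T.content k = h x (n+1) la := by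
  rw [h_chain]
  have hinj : Function.Injective
      (fun (T : SSYT (n+1) la) (m : Fin (n+1)) => cnt T m) := by
    intro T T' hT
    exact cnt_inj T T' fun m hm => congrFun hT ⟨m, hm⟩
  rw [← hinj.tsum_eq]
  · congr 1; ext T
    rw [snoc_cnt]
    simp only [ch, Fin.val_zero, cnt_zero, if_true, one_mul, Fin.val_castSucc, Fin.val_succ]
    refine Finset.prod_congr rfl fun m _ => ?_
    rw [W_eq (fun i => cnt_mono T m i)
      (fun i => cnt_inter hla T m _ _ Fin.castSucc_lt_succ), content_eq]
  · intro g hg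
    simp only [ch, Function.mem_support, mul_ne_zero_iff, Finset.prod_ne_zero_iff] at hg
    obtain ⟨hg0, hg1⟩ := hg
    let Gf : Fin (n+2) → Fin (n+1) → ℕ := Fin.snoc (α := fun _ => Fin (n+1) → ℕ) g la
    let G : ℕ → Fin (n+1) → ℕ := fun m => if hm : m < n+2 then Gf ⟨m, hm⟩ else la
    have hG : ∀ m (hm : m < n+2), G m = Gf ⟨m, hm⟩ := fun m hm => by simp [G, hm]
    have hstep : ∀ m < n+1, (∀ i, G m i ≤ G (m+1) i) ∧ ∀ i : Fin n, G (m+1) i.succ ≤ G m i.castSucc := by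
      intro m hm
      rw [hG m (by omega), hG (m+1) (by omega)]
      exact W_ne (hg1 ⟨m, hm⟩ (Finset.mem_univ _))
    obtain ⟨T, hT⟩ := exists_T la G
      (by rw [hG 0 (by omega)]
          by_contra hc
          exact hg0 (if_neg hc))
      (by rw [hG (n+1) (by omega)]
          exact Fin.snoc_last (α := fun _ => Fin (n+1) → ℕ) (p := g) (x := la))
      (fun m hm => (hstep m hm).1) (fun m hm => (hstep m hm).2)
    refine ⟨T, ?_⟩
    ext m : 1
    simp only []
    rw [hT m m.2.le, hG m (by omega)]
    exact Fin.snoc_castSucc (α := fun _ => Fin (n+1) → ℕ) (p := g) (x := la) (i := m)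

lemma h_anti {n : ℕ} (x : ℕ → ℝ≥0∞) (la : Fin (n+1) → ℕ) (hh : h x (n+1) la ≠ 0) : Antitone la := by
  simp only [h, ne_eq, ENNReal.tsum_eq_zero, not_forall] at hh
  obtain ⟨mu, hm⟩ := hh
  have h1 := W_ne (left_ne_zero_of_mul hm)
  rw [Fin.antitone_iff_succ_le]
  intro i
  exact (h1.2 i).trans (h1.1 _)

noncomputable def ex {n : ℕ} (x : Fin (n+1) → ℝ) (k : ℕ) : ℝ≥0∞ :=
  if hk : k < n+1 then ENNReal.ofReal (x ⟨k, hk⟩) else 0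

lemma ex_val {n : ℕ} (x : Fin (n+1) → ℝ) (k : Fin (n+1)) : ex x k = ENNReal.ofReal (x k) := by
  simp only [ex, k.2, dif_pos]

lemma schur_real {n : ℕ} (x : Fin (n+1) → ℝ) (hx : ∀ i, 0 ≤ x i) (la : Fin (n+1) → ℕ)
    (hla : Antitone la) : schur (n+1) la x = (h (ex x) (n+1) la).toReal := by
  rw [← schurE _ _ hla, ENNReal.tsum_toReal_eq]
  · unfold schur
    congr 1; ext T
    rw [ENNReal.toReal_prod]
    refine Finset.prod_congr rfl fun k _ => ?_
    rw [ENNReal.toReal_pow, ex_val, ENNReal.toReal_ofReal (hx k)]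
  · intro T
    refine ENNReal.prod_ne_top fun k _ => ENNReal.pow_ne_top ?_
    rw [ex_val]; exact ENNReal.ofReal_ne_top

end CauchyAux

/-- **Cauchy identity.** For `x_1, …, x_N, y_1, …, y_N ∈ [0,1)`, the family
`s_λ(x) · s_λ(y)`, indexed by Young diagrams `λ` with at most `N` rows, is summable with sum
`∏_{i,j} 1/(1 - x_i y_j)`. -/
theorem cauchy_identity (N : ℕ) (hN : 0 < N) (x y : Fin N → ℝ)
    (hx : ∀ i, x i ∈ Set.Ico (0 : ℝ) 1) (hy : ∀ i, y i ∈ Set.Ico (0 : ℝ) 1) :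
    Summable (fun lam : {l : Fin N → ℕ // Antitone l} => schur N lam.1 x * schur N lam.1 y) ∧
    ∑' lam : {l : Fin N → ℕ // Antitone l}, schur N lam.1 x * schur N lam.1 y
      = ∏ i : Fin N, ∏ j : Fin N, (1 - x i * y j)⁻¹ := by
  obtain ⟨n, rfl⟩ : ∃ n, N = n + 1 := ⟨N - 1, by omega⟩
  have hxy : ∀ i j, x i * y j < 1 := fun i j =>
    mul_lt_one_of_nonneg_of_lt_one_left (hx i).1 (hx i).2 (hy j).2.le
  have hterm : ∀ i j : Fin (n+1), (1 - CauchyAux.ex x i * CauchyAux.ex y j)⁻¹ =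
      ENNReal.ofReal ((1 - x i * y j)⁻¹) := by
    intro i j
    rw [CauchyAux.ex_val, CauchyAux.ex_val, ← ENNReal.ofReal_mul (hx i).1, ← ENNReal.ofReal_one,
      ← ENNReal.ofReal_sub _ (mul_nonneg (hx i).1 (hy j).1),
      ENNReal.ofReal_inv_of_pos (by linarith [hxy i j])]
  have hE := CauchyAux.cauchyE (n := n) (CauchyAux.ex x) (CauchyAux.ex y) (n+1)
  rw [← Fin.prod_univ_eq_prod_range
    (fun j => ∏ i ∈ Finset.range (n+1), (1 - CauchyAux.ex x i * CauchyAux.ex y j)⁻¹)] at hE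
  simp only [← Fin.prod_univ_eq_prod_range
    (fun i => (1 - CauchyAux.ex x i * CauchyAux.ex y _)⁻¹), hterm] at hE
  rw [Finset.prod_comm] at hE
  rw [← tsum_subtype_eq_of_support_subset (s := {l : Fin (n+1) → ℕ | Antitone l})
    (fun la hla => CauchyAux.h_anti _ la (left_ne_zero_of_mul hla))] at hE
  have hfun : (fun lam : {l : Fin (n+1) → ℕ // Antitone l} =>
      schur (n+1) lam.1 x * schur (n+1) lam.1 y) = fun lam =>
      (CauchyAux.h (CauchyAux.ex x) (n+1) lam.1 * CauchyAux.h (CauchyAux.ex y) (n+1) lam.1).toReal := by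
    ext lam
    rw [ENNReal.toReal_mul, CauchyAux.schur_real x (fun i => (hx i).1) _ lam.2,
      CauchyAux.schur_real y (fun i => (hy i).1) _ lam.2]
  have hfin : ∑' lam : {l : Fin (n+1) → ℕ // Antitone l},
      CauchyAux.h (CauchyAux.ex x) (n+1) lam.1 * CauchyAux.h (CauchyAux.ex y) (n+1) lam.1 ≠ ⊤ := by
    refine ne_of_eq_of_ne hE ?_
    exact ENNReal.prod_ne_top fun i _ => ENNReal.prod_ne_top fun j _ => ENNReal.ofReal_ne_top
  rw [hfun]
  refine ⟨ENNReal.summable_toReal hfin, ?_⟩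
  rw [← ENNReal.tsum_toReal_eq (ENNReal.ne_top_of_tsum_ne_top hfin)]
  refine (congrArg ENNReal.toReal hE).trans ?_
  rw [ENNReal.toReal_prod]
  refine Finset.prod_congr rfl fun i _ => ?_
  rw [ENNReal.toReal_prod]
  refine Finset.prod_congr rfl fun j _ => ?_
  rw [ENNReal.toReal_ofReal]
  exact inv_nonneg.2 (by linarith [hxy i j])
end

section
/- Harish-Chandra–Itzykson–Zuber formula: for every positive integer N there exists a constant c_N > 0, depending only on N, such that for all real diagonal N×N matrices C = diag(c_1,…,c_N) and D = diag(d_1,…,d_N) whose diagonal entries are pairwise distinct, ∫_{U(N)} exp(N·tr(U C U* D)) dm_N(U) = c_N · det((exp(N c_i d_j))_{1≤i,j≤N}) / (∏_{1≤i<j≤N}(c_i − c_j) · ∏_{1≤i<j≤N}(d_i − d_j)). -/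
/-- Matrices are endowed with the Borel sigma-algebra of their (entrywise) topology. -/
noncomputable instance matrixMeasurableSpace {m n α : Type*} [TopologicalSpace α] :
    MeasurableSpace (Matrix m n α) := borel _

open MeasureTheory

set_option linter.unusedSectionVars false
namespace HCIZ
open Finset

section Lagr
variable {ι : Type*} [Fintype ι] [DecidableEq ι]

theorem lagr1 (R : Finset ι) (hR : R.Nonempty) (x : ι → ℂ) (hx : Set.InjOn x R) (s : ℂ)
    (hs : ∀ j ∈ R, x j ≠ s) :
    ∑ l ∈ R, (x l - s)⁻¹ * ∏ j ∈ R.erase l, (x j - x l)⁻¹ = ∏ j ∈ R, (x j - s)⁻¹ := by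
  have hv : Set.InjOn (fun j => - x j) R := fun a ha b hb h => hx ha hb (neg_injective h)
  have h := Lagrange.eval_interpolate_not_at_node (s := R) (v := fun j => - x j)
    (1 : ι → ℂ) (x := -s) (fun i hi h => hs i hi (neg_injective h).symm)
  rw [Lagrange.interpolate_one hv hR] at h
  simp only [Polynomial.eval_one, Lagrange.eval_nodal, Lagrange.nodalWeight, Pi.one_apply,
    mul_one] at h
  have e1 : ∀ j, - s - - x j = x j - s := fun j => by ring
  have e2 : ∀ j k, - x j - - x k = x k - x j := fun j k => by ring
  simp only [e1, e2] at h
  have hne : ∏ j ∈ R, (x j - s) ≠ 0 := Finset.prod_ne_zero_iff.2 fun j hj => sub_ne_zero.2 (hs j hj)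
  rw [Finset.prod_inv_distrib]
  refine eq_inv_of_mul_eq_one_right (Eq.trans ?_ h.symm)
  congr 1
  exact Finset.sum_congr rfl fun l _ => mul_comm _ _

theorem hasDerivAt_inv_sub (a s : ℂ) (h : a ≠ s) :
    HasDerivAt (fun s => (a - s)⁻¹) ((a - s)⁻¹ * (a - s)⁻¹) s := by
  have h1 := (((hasDerivAt_id s).const_sub a).fun_inv (sub_ne_zero.2 h))
  refine h1.congr_deriv ?_
  have := sub_ne_zero.2 h
  simp only [id]
  field_simp

theorem hasDerivAt_prod_inv (R : Finset ι) (x : ι → ℂ) (s : ℂ) (hs : ∀ j ∈ R, x j ≠ s) :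
    HasDerivAt (fun s => ∏ j ∈ R, (x j - s)⁻¹)
      ((∑ j ∈ R, (x j - s)⁻¹) * ∏ j ∈ R, (x j - s)⁻¹) s := by
  have := HasDerivAt.fun_finsetProd (u := R) (f := fun j s => (x j - s)⁻¹)
    (f' := fun j => (x j - s)⁻¹ * (x j - s)⁻¹) (x := s)
    (fun j hj => hasDerivAt_inv_sub _ _ (hs j hj))
  refine this.congr_deriv ?_
  rw [Finset.sum_mul]
  refine Finset.sum_congr rfl fun j hj => ?_
  rw [← Finset.mul_prod_erase R _ hj, smul_eq_mul]; ring

theorem lagr2 (R : Finset ι) (x : ι → ℂ) (hx : Set.InjOn x R) (s : ℂ)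
    (hs : ∀ j ∈ R, x j ≠ s) :
    ∑ l ∈ R, ((x l - s)⁻¹ * (x l - s)⁻¹) * ∏ j ∈ R.erase l, (x j - x l)⁻¹
      = (∑ j ∈ R, (x j - s)⁻¹) * ∏ j ∈ R, (x j - s)⁻¹ := by
  rcases R.eq_empty_or_nonempty with rfl | hR
  · simp
  have h1 := hasDerivAt_prod_inv R x s hs
  have h2 : HasDerivAt (fun s => ∑ l ∈ R, (x l - s)⁻¹ * ∏ j ∈ R.erase l, (x j - x l)⁻¹)
      (∑ l ∈ R, ((x l - s)⁻¹ * (x l - s)⁻¹) * ∏ j ∈ R.erase l, (x j - x l)⁻¹) s :=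
    HasDerivAt.fun_sum fun l hl => (hasDerivAt_inv_sub _ _ (hs l hl)).mul_const _
  refine h2.unique (h1.congr_of_eventuallyEq ?_)
  have : ∀ᶠ t in nhds s, ∀ j ∈ R, x j ≠ t := by
    rw [Filter.eventually_all_finset]
    intro j hj
    filter_upwards [isOpen_ne.mem_nhds (hs j hj).symm] with t ht using Ne.symm ht
  filter_upwards [this] with t ht using lagr1 R hR x hx t ht

theorem lagr3 (R : Finset ι) (hR : 2 ≤ R.card) (x : ι → ℂ) (hx : Set.InjOn x R) :
    ∑ l ∈ R, ∏ j ∈ R.erase l, (x j - x l)⁻¹ = 0 := by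
  obtain ⟨r, hr⟩ : R.Nonempty := Finset.card_pos.1 (by omega)
  have hne : (R.erase r).Nonempty := Finset.card_pos.1 (by rw [Finset.card_erase_of_mem hr]; omega)
  have h := lagr1 (R.erase r) hne x (hx.mono (by simp)) (x r)
    (fun j hj h => (Finset.ne_of_mem_erase hj) (hx (Finset.mem_of_mem_erase hj) hr h))
  rw [← Finset.add_sum_erase R _ hr, ← h, ← Finset.sum_add_distrib]
  refine Finset.sum_eq_zero fun l hl => ?_
  have hlr : r ∈ R.erase l := Finset.mem_erase.2 ⟨(Finset.ne_of_mem_erase hl).symm, hr⟩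
  rw [← Finset.mul_prod_erase (R.erase l) _ hlr, Finset.erase_right_comm, ← add_mul,
    ← neg_sub (x l) (x r), inv_neg]
  ring

theorem sum_insert_reindex (l : ι) (g : Finset ι → ℂ) :
    ∑ T ∈ (univ.erase l).powerset, g (insert l T)
      = ∑ R : Finset ι, if l ∈ R then g R else 0 := by
  rw [← Finset.sum_filter]
  refine Finset.sum_bij' (fun T _ => insert l T) (fun R _ => R.erase l) ?_ ?_ ?_ ?_ ?_
  · intro T hT; simp
  · intro R hR; simp [Finset.erase_subset_erase]
  · intro T hT
    rw [Finset.mem_powerset] at hT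
    exact Finset.erase_insert fun h => by simpa using hT h
  · intro R hR
    exact Finset.insert_erase (by simpa using hR)
  · intro T hT; rfl

theorem sum_split (i : ι) (g : Finset ι → ℂ) :
    ∑ R : Finset ι, g R = ∑ S ∈ (univ.erase i).powerset, (g S + g (insert i S)) := by
  have := Finset.sum_powerset_insert (Finset.notMem_erase i (univ : Finset ι)) g
  rw [Finset.insert_erase (mem_univ i), Finset.powerset_univ] at this
  rw [this, Finset.sum_add_distrib]

/-- numerators -/
noncomputable def wsum (x : ι → ℂ) (H : Finset ι → ℂ) (l : ι) : ℂ :=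
  ∑ T ∈ (univ.erase l).powerset, (∏ j ∈ T, (x j - x l)⁻¹) * H (insert l T)

theorem wsum_eq (x : ι → ℂ) (H : Finset ι → ℂ) (l : ι) :
    wsum x H l = ∑ R : Finset ι, if l ∈ R then (∏ j ∈ R.erase l, (x j - x l)⁻¹) * H R else 0 := by
  rw [← sum_insert_reindex l (fun R => (∏ j ∈ R.erase l, (x j - x l)⁻¹) * H R)]
  refine Finset.sum_congr rfl fun T hT => ?_
  rw [Finset.mem_powerset] at hT
  rw [Finset.erase_insert fun h => by simpa using hT h]

theorem wsum_step (x : ι → ℂ) (hx : Function.Injective x) (H : Finset ι → ℂ) (hH : H ∅ = 0)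
    (i : ι) :
    ∑ l ∈ univ.erase i, (x l - x i)⁻¹ * wsum x H l
      = ∑ S ∈ (univ.erase i).powerset, (∏ j ∈ S, (x j - x i)⁻¹) *
          (H S - (∑ j ∈ S, (x j - x i)⁻¹) * H (insert i S)) := by
  simp only [wsum_eq]
  simp only [Finset.mul_sum (s := (univ : Finset (Finset ι)))]
  rw [Finset.sum_comm, sum_split i]
  refine Finset.sum_congr rfl fun S hS => ?_
  rw [Finset.mem_powerset] at hS
  have hiS : i ∉ S := fun h => by simpa using hS h
  have hs : ∀ j ∈ S, x j ≠ x i := fun j hj h => hiS (hx h ▸ hj)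
  have e1 : ∑ l ∈ univ.erase i, (x l - x i)⁻¹ *
      (if l ∈ S then (∏ j ∈ S.erase l, (x j - x l)⁻¹) * H S else 0)
      = (∏ j ∈ S, (x j - x i)⁻¹) * H S := by
    rcases S.eq_empty_or_nonempty with rfl | hne
    · simp [hH]
    rw [← lagr1 S hne x hx.injOn (x i) hs, Finset.sum_mul]
    rw [← Finset.sum_subset hS]
    · refine Finset.sum_congr rfl fun l hl => ?_
      rw [if_pos hl]; ring
    · intro l _ hl; rw [if_neg hl, mul_zero]
  have e2 : ∑ l ∈ univ.erase i, (x l - x i)⁻¹ *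
      (if l ∈ insert i S then (∏ j ∈ (insert i S).erase l, (x j - x l)⁻¹) * H (insert i S) else 0)
      = - ((∑ j ∈ S, (x j - x i)⁻¹) * ∏ j ∈ S, (x j - x i)⁻¹) * H (insert i S) := by
    rw [← lagr2 S x hx.injOn (x i) hs, ← Finset.sum_neg_distrib, Finset.sum_mul]
    rw [← Finset.sum_subset hS]
    · refine Finset.sum_congr rfl fun l hl => ?_
      have hli : l ≠ i := fun h => hiS (h ▸ hl)
      rw [if_pos (Finset.mem_insert_of_mem hl), Finset.erase_insert_of_ne hli.symm,
        Finset.prod_insert (fun h => hiS (Finset.mem_of_mem_erase h)), ← neg_sub (x l) (x i), inv_neg]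
      ring
    · intro l hl hl'
      rw [if_neg, mul_zero]
      rw [Finset.mem_insert]
      rintro (h | h)
      · simp [h] at hl
      · exact hl' h
  rw [e1, e2]; ring

theorem wsum_total (x : ι → ℂ) (hx : Function.Injective x) (H : Finset ι → ℂ) :
    ∑ l, wsum x H l = ∑ l, H {l} := by
  simp only [wsum_eq]
  rw [Finset.sum_comm]
  have : ∀ R : Finset ι, (∑ l, if l ∈ R then (∏ j ∈ R.erase l, (x j - x l)⁻¹) * H R else 0)
      = if R.card = 1 then H R else 0 := by
    intro R
    rw [← Finset.sum_filter, ← Finset.sum_mul]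
    have : univ.filter (fun l => l ∈ R) = R := by ext; simp
    rw [this]
    split_ifs with h
    · obtain ⟨a, rfl⟩ := Finset.card_eq_one.1 h
      simp
    · rcases R.eq_empty_or_nonempty with rfl | hne
      · simp
      · rw [lagr3 R _ x hx.injOn, zero_mul]
        have := Finset.card_pos.2 hne
        omega
  simp only [this]
  rw [← Finset.sum_filter]
  symm
  refine Finset.sum_bij (fun l _ => {l}) ?_ ?_ ?_ ?_
  · intro l _; simp
  · intro a _ b _ h; simpa using h
  · intro R hR
    obtain ⟨a, rfl⟩ := Finset.card_eq_one.1 (by simpa using hR)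
    exact ⟨a, mem_univ _, rfl⟩
  · intro l _; rfl
end Lagr
end HCIZ
namespace HCIZ
open Finset MvPolynomial

section Ops
variable {ι : Type*} [Fintype ι] [DecidableEq ι]

/-- recursion -/
noncomputable def bfun (i : ι) (f : ℕ → MvPolynomial ι ℂ) : ℕ → MvPolynomial ι ℂ
  | 0 => 0
  | n + 1 => f n + pderiv i (bfun i f n)

/-- operator -/
noncomputable def bop (i : ι) : Module.End ℂ (ℕ → MvPolynomial ι ℂ) where
  toFun := bfun i
  map_add' f g := by
    funext n
    induction n with
    | zero => simp [bfun]
    | succ n ih => simp only [bfun, Pi.add_apply] at ih ⊢; rw [ih, map_add]; ring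
  map_smul' c f := by
    funext n
    induction n with
    | zero => simp [bfun]
    | succ n ih =>
      simp only [bfun, Pi.smul_apply, RingHom.id_apply] at ih ⊢
      rw [ih, Derivation.map_smul, smul_add]

theorem bop_zero (i : ι) (f : ℕ → MvPolynomial ι ℂ) : bop i f 0 = 0 := rfl
theorem bop_succ (i : ι) (f : ℕ → MvPolynomial ι ℂ) (n : ℕ) :
    bop i f (n + 1) = f n + pderiv i (bop i f n) := rfl

theorem bop_unique (i : ι) (f g : ℕ → MvPolynomial ι ℂ) (h0 : g 0 = 0)
    (h : ∀ n, g (n + 1) = f n + pderiv i (g n)) : g = bop i f := by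
  funext n
  induction n with
  | zero => rw [h0, bop_zero]
  | succ n ih => rw [h, bop_succ, ih]

theorem pderiv_comm' (i j : ι) (p : MvPolynomial ι ℂ) :
    pderiv i (pderiv j p) = pderiv j (pderiv i p) := by
  ext m
  simp only [coeff_pderiv]
  by_cases h : i = j
  · subst h; rfl
  · simp only [Finsupp.add_apply, Finsupp.single_apply, if_neg h, if_neg (Ne.symm h), add_zero]
    rw [add_right_comm]; ring

theorem bop_comm (i j : ι) : Commute (bop (ι := ι) i) (bop j) := by
  ext1 f
  change bop i (bop j f) = bop j (bop i f)
  have key : (fun n => bop i (bop j f) (n + 1) - pderiv j (bop i (bop j f) n)) = bop i f := by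
    apply bop_unique
    · simp [bop_succ, bop_zero]
    · intro n
      rw [bop_succ i (bop j f) (n+1), bop_succ j f n]
      rw [map_sub, pderiv_comm' i j]
      rw [bop_succ i (bop j f) n]
      simp only [map_add]
      ring
  apply bop_unique
  · rfl
  · intro n
    rw [← congrFun key n]; ring

theorem bop_pw (T : Finset ι) : (T : Set ι).Pairwise (Function.onFun Commute (bop (ι := ι))) :=
  fun i _ j _ _ => bop_comm i j

/-- product operator -/
noncomputable def Hop (T : Finset ι) : Module.End ℂ (ℕ → MvPolynomial ι ℂ) :=
  T.noncommProd bop (bop_pw T)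

theorem Hop_empty : Hop (∅ : Finset ι) = 1 := Finset.noncommProd_empty _ _

theorem Hop_insert (i : ι) (T : Finset ι) (h : i ∉ T) (f : ℕ → MvPolynomial ι ℂ) :
    Hop (insert i T) f = bop i (Hop T f) := by
  rw [Hop, Finset.noncommProd_insert_of_notMem _ _ _ _ h]; rfl

theorem Hop_zero (T : Finset ι) (hT : T.Nonempty) (f : ℕ → MvPolynomial ι ℂ) : Hop T f 0 = 0 := by
  obtain ⟨i, hi⟩ := hT
  rw [← Finset.insert_erase hi, Hop_insert _ _ (Finset.notMem_erase i T), bop_zero]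

theorem Hop_singleton (i : ι) (p : MvPolynomial ι ℂ) (k : ℕ) :
    Hop {i} (Pi.single 0 p) (k + 1) = (pderiv i)^[k] p := by
  have : Hop {i} (Pi.single 0 p) = bop i (Pi.single 0 p) := by
    have := Hop_insert i ∅ (by simp) (Pi.single 0 p)
    rw [Hop_empty] at this
    simpa using this
  rw [this]
  induction k with
  | zero => simp [bop_succ, bop_zero]
  | succ k ih => rw [bop_succ, ih, Function.iterate_succ_apply']; simp

theorem hasDerivAt_eval (p : MvPolynomial ι ℂ) (x : ι → ℂ) (i : ι) :
    HasDerivAt (fun s => eval (Function.update x i s) p) (eval x (pderiv i p)) (x i) := by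
  induction p using MvPolynomial.induction_on with
  | C a => simpa using hasDerivAt_const (x i) a
  | add p q hp hq => simpa using hp.fun_add hq
  | mul_X p j hp =>
    have hX : HasDerivAt (fun s => Function.update x i s j) (Pi.single (M := fun _ => ℂ) i 1 j) (x i) := by
      by_cases h : j = i
      · subst h; simpa using hasDerivAt_id' (x j)
      · simpa [h] using hasDerivAt_const (x i) (x j)
    have := hp.mul hX
    simp only [map_mul, eval_X]
    refine this.congr_deriv ?_
    simp [Derivation.leibniz, pderiv_X, Pi.single_apply]
    split_ifs <;> simp [eq_comm, *] <;> ring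

variable {A : Type*} [CommRing A] [Algebra ℂ A] (W : Matrix ι ι A)
  (M : ℕ → A →ₗ[ℂ] MvPolynomial ι ℂ) (Δ : MvPolynomial ι ℂ)

theorem stepB
    (hD : ∀ i n V, pderiv i (M (n+1) V) = M n (W i i * V))
    (hSD : ∀ i j, i ≠ j → ∀ n k, (X i - X j) * M n ((W^k) i j * W j i)
      = M (n+1) ((W^k) i i - (W^k) j j))
    (hΔ : ∀ i x, Function.Injective x →
      eval x (pderiv i Δ) = eval x Δ * ∑ j ∈ univ.erase i, (x i - x j)⁻¹)
    (x : ι → ℂ) (hx : Function.Injective x) (i : ι) (n k : ℕ) :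
    eval x (Δ * M n ((W^(k+1)) i i)) = eval x (pderiv i (Δ * M (n+1) ((W^k) i i)))
      + ∑ j ∈ univ.erase i, (x j - x i)⁻¹ * eval x (Δ * M (n+1) ((W^k) j j)) := by
  have e1 : M n ((W^(k+1)) i i) = M n (W i i * (W^k) i i)
      + ∑ j ∈ univ.erase i, M n ((W^k) i j * W j i) := by
    rw [pow_succ, Matrix.mul_apply, ← Finset.add_sum_erase univ _ (mem_univ i), map_add, map_sum,
      mul_comm]
  have e2 : ∀ j ∈ univ.erase i, eval x (M n ((W^k) i j * W j i))
      = (x i - x j)⁻¹ * (eval x (M (n+1) ((W^k) i i)) - eval x (M (n+1) ((W^k) j j))) := by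
    intro j hj
    have hne : i ≠ j := (Finset.ne_of_mem_erase hj).symm
    have h := congrArg (eval x) (hSD i j hne n k)
    simp only [map_mul, map_sub, eval_X] at h
    rw [← h, inv_mul_cancel_left₀ (sub_ne_zero.2 (hx.ne hne))]
  rw [e1, Derivation.leibniz, hD]
  simp only [map_add, map_mul, smul_eq_mul, map_sum]
  rw [Finset.sum_congr rfl e2, hΔ i x hx]
  rw [mul_add, add_assoc]
  congr 1
  rw [Finset.mul_sum, Finset.mul_sum, Finset.mul_sum, ← Finset.sum_add_distrib]
  refine Finset.sum_congr rfl fun j _ => ?_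
  rw [← neg_sub (x i) (x j), inv_neg]
  ring

theorem mainB
    (hD : ∀ i n V, pderiv i (M (n+1) V) = M n (W i i * V))
    (hSD : ∀ i j, i ≠ j → ∀ n k, (X i - X j) * M n ((W^k) i j * W j i)
      = M (n+1) ((W^k) i i - (W^k) j j))
    (hΔ : ∀ i x, Function.Injective x →
      eval x (pderiv i Δ) = eval x Δ * ∑ j ∈ univ.erase i, (x i - x j)⁻¹)
    (k : ℕ) : ∀ (n : ℕ) (x : ι → ℂ) (_ : Function.Injective x) (i : ι),
    eval x (Δ * M n ((W^k) i i)) = wsum x (fun T => eval x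
      (Hop T (Pi.single 0 (Δ * M (n + k) 1)) (k + 1))) i := by
  induction k with
  | zero =>
    intro n x hx i
    rw [wsum, Finset.sum_eq_single ∅]
    · have := Hop_singleton i (Δ * M n 1) 0
      simp only [zero_add] at this
      simp [this]
    · intro T hT hne
      rw [Finset.mem_powerset] at hT
      rw [Hop_insert _ _ fun h => by simpa using hT h, bop_succ, bop_zero,
        Hop_zero _ (Finset.nonempty_iff_ne_empty.2 hne)]
      simp
    · simp
  | succ k ih =>
    intro n x hx i
    set p := Δ * M (n + (k + 1)) 1 with hp
    have ih' : ∀ (x : ι → ℂ) (_ : Function.Injective x) (i : ι),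
      eval x (Δ * M (n+1) ((W^k) i i)) = wsum x (fun T => eval x
        (Hop T (Pi.single 0 p) (k + 1))) i := by
      intro x hx i
      rw [ih (n+1) x hx i, show n + 1 + k = n + (k+1) by ring]
    rw [stepB W M Δ hD hSD hΔ x hx, Finset.sum_congr rfl fun j _ => by rw [ih' x hx j],
      wsum_step x hx _ (by simp [Hop_empty])]
    -- derivative
    have hd : HasDerivAt (fun s => ∑ S ∈ (univ.erase i).powerset, (∏ j ∈ S, (x j - s)⁻¹) *
        eval (Function.update x i s) (Hop (insert i S) (Pi.single 0 p) (k + 1)))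
        (∑ S ∈ (univ.erase i).powerset, (((∑ j ∈ S, (x j - x i)⁻¹) * ∏ j ∈ S, (x j - x i)⁻¹) *
          eval x (Hop (insert i S) (Pi.single 0 p) (k + 1)) + (∏ j ∈ S, (x j - x i)⁻¹) *
          eval x (pderiv i (Hop (insert i S) (Pi.single 0 p) (k + 1))))) (x i) := by
      refine HasDerivAt.fun_sum fun S hS => ?_
      rw [Finset.mem_powerset] at hS
      have h1 := hasDerivAt_prod_inv S x (x i) fun j hj h => by
        have := hS hj
        rw [hx h] at this
        simp at this
      have := h1.mul (hasDerivAt_eval (Hop (insert i S) (Pi.single 0 p) (k + 1)) x i)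
      refine this.congr_deriv ?_
      simp
    have hd2 := hasDerivAt_eval (Δ * M (n+1) ((W^k) i i)) x i
    have hev : (fun s => eval (Function.update x i s) (Δ * M (n+1) ((W^k) i i))) =ᶠ[nhds (x i)]
        (fun s => ∑ S ∈ (univ.erase i).powerset, (∏ j ∈ S, (x j - s)⁻¹) *
        eval (Function.update x i s) (Hop (insert i S) (Pi.single 0 p) (k + 1))) := by
      have : ∀ᶠ t in nhds (x i), ∀ j ∈ univ.erase i, x j ≠ t := by
        rw [Filter.eventually_all_finset]
        intro j hj
        have : x i ≠ x j := fun h => by simp [hx h] at hj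
        filter_upwards [isOpen_ne.mem_nhds this] with t ht using Ne.symm ht
      filter_upwards [this] with t ht
      have hinj : Function.Injective (Function.update x i t) := by
        intro a b hab
        by_cases ha : a = i <;> by_cases hb : b = i
        · rw [ha, hb]
        · subst ha
          rw [Function.update_self, Function.update_of_ne hb] at hab
          exact absurd hab.symm (ht b (by simp [hb]))
        · subst hb
          rw [Function.update_self, Function.update_of_ne ha] at hab
          exact absurd hab (ht a (by simp [ha]))
        · rw [Function.update_of_ne ha, Function.update_of_ne hb] at hab
          exact hx hab
      rw [ih' _ hinj i, wsum]
      refine Finset.sum_congr rfl fun S hS => ?_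
      congr 1
      rw [Finset.mem_powerset] at hS
      refine Finset.prod_congr rfl fun j hj => ?_
      have := Finset.ne_of_mem_erase (hS hj)
      rw [Function.update_self, Function.update_of_ne this]
    rw [hd2.unique (hd.congr_of_eventuallyEq hev), ← Finset.sum_add_distrib, wsum]
    refine Finset.sum_congr rfl fun S hS => ?_
    rw [Finset.mem_powerset] at hS
    rw [Hop_insert _ _ fun h => by simpa using hS h, bop_succ i _ (k+1)]
    simp only [map_add]
    ring

theorem finalB
    (hD : ∀ i n V, pderiv i (M (n+1) V) = M n (W i i * V))
    (hSD : ∀ i j, i ≠ j → ∀ n k, (X i - X j) * M n ((W^k) i j * W j i)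
      = M (n+1) ((W^k) i i - (W^k) j j))
    (hΔ : ∀ i x, Function.Injective x →
      eval x (pderiv i Δ) = eval x Δ * ∑ j ∈ univ.erase i, (x i - x j)⁻¹)
    (hΔ0 : Δ ≠ 0) (hΔ1 : ∀ x, ¬ Function.Injective x → eval x Δ = 0)
    (y : ι → ℂ) (htr : ∀ k, ∑ i, (W^k) i i = algebraMap ℂ A (∑ i, y i ^ k)) (n k : ℕ) :
    ∑ i, (pderiv i)^[k] (Δ * M (n + k) 1) = C (∑ i, y i ^ k) * (Δ * M n 1) := by
  refine mul_left_cancel₀ hΔ0 (MvPolynomial.funext fun x => ?_)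
  by_cases hx : Function.Injective x
  · rw [map_mul, map_mul]
    congr 1
    have h := Finset.sum_congr (s₁ := univ) rfl fun i (_ : i ∈ univ) =>
      mainB W M Δ hD hSD hΔ k n x hx i
    rw [wsum_total x hx] at h
    simp only [Hop_singleton] at h
    rw [map_sum, ← h, ← map_sum, ← Finset.mul_sum, ← map_sum, htr, Algebra.algebraMap_eq_smul_one,
      map_smul, smul_eq_C_mul]
    congr 1; ring
  · rw [map_mul, map_mul, hΔ1 x hx]; simp
end Ops
end HCIZ
namespace HCIZ
open Finset MvPolynomial

section Uniq
variable {N : ℕ}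

/-- Taylor derivative -/
noncomputable def hfun (p : MvPolynomial (Fin N) ℂ) (l : Fin N →₀ ℕ) : ℂ :=
  (∏ i, ((l i).factorial : ℂ)) * coeff l p

theorem hfun_pderiv (p : MvPolynomial (Fin N) ℂ) (l : Fin N →₀ ℕ) (i : Fin N) :
    hfun (pderiv i p) l = hfun p (l + Finsupp.single i 1) := by
  unfold hfun
  rw [coeff_pderiv, ← Finset.mul_prod_erase univ _ (mem_univ i),
    ← Finset.mul_prod_erase univ (fun j => (((l + Finsupp.single i 1 : Fin N →₀ ℕ) j).factorial : ℂ)) (mem_univ i)]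
  have : ∏ j ∈ univ.erase i, (((l + Finsupp.single i 1 : Fin N →₀ ℕ) j).factorial : ℂ)
      = ∏ j ∈ univ.erase i, ((l j).factorial : ℂ) := by
    refine Finset.prod_congr rfl fun j hj => ?_
    simp [Finsupp.single_apply, (Finset.ne_of_mem_erase hj).symm]
  rw [this]
  simp [Nat.factorial_succ]
  ring

theorem hfun_iter (i : Fin N) (k : ℕ) : ∀ (p : MvPolynomial (Fin N) ℂ) (l : Fin N →₀ ℕ),
    hfun ((pderiv i)^[k] p) l = hfun p (l + Finsupp.single i k) := by
  induction k with
  | zero => simp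
  | succ k ih =>
    intro p l
    rw [Function.iterate_succ_apply, ih, hfun_pderiv, add_assoc, ← Finsupp.single_add]

theorem hfun_eq_zero (p : MvPolynomial (Fin N) ℂ) (l : Fin N →₀ ℕ) :
    hfun p l = 0 ↔ coeff l p = 0 := by
  unfold hfun
  have : (∏ i, ((l i).factorial : ℂ)) ≠ 0 :=
    Finset.prod_ne_zero_iff.2 fun i _ => Nat.cast_ne_zero.2 (Nat.factorial_ne_zero _)
  simp [this]

theorem good_esymm (ℓ : MvPolynomial (Fin N) ℂ →ₗ[ℂ] ℂ) (y : Fin N → ℂ)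
    (hp : ∀ k q, ℓ (psum (Fin N) ℂ k * q) = (∑ i, y i ^ k) * ℓ q) (k : ℕ) :
    ∀ q, ℓ (esymm (Fin N) ℂ k * q) = eval y (esymm (Fin N) ℂ k) * ℓ q := by
  induction k using Nat.strong_induction_on with
  | _ k ih =>
  intro q
  rcases Nat.eq_zero_or_pos k with rfl | hk
  · simp [esymm_zero]
  have hk' : (k : ℂ) ≠ 0 := Nat.cast_ne_zero.2 hk.ne'
  have hN := mul_esymm_eq_sum (Fin N) ℂ k
  have e1 := congrArg (eval y) hN
  have e2 := congrArg (fun r => ℓ (r * q)) hN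
  refine mul_left_cancel₀ hk' ?_
  simp only [map_mul, map_natCast, map_pow, map_neg, map_one, map_sum] at e1
  rw [← mul_assoc, e1]
  have e3 : ℓ (↑k * esymm (Fin N) ℂ k * q) = k * ℓ (esymm (Fin N) ℂ k * q) := by
    rw [mul_assoc, ← nsmul_eq_mul, map_nsmul, nsmul_eq_mul]
  have sg : ∀ (m : ℕ) (r : MvPolynomial (Fin N) ℂ), ℓ ((-1)^m * r) = (-1)^m * ℓ r := by
    intro m r
    have : ((-1)^m * r : MvPolynomial (Fin N) ℂ) = ((-1 : ℂ)^m) • r := by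
      rw [smul_eq_C_mul]; simp
    rw [this, map_smul, smul_eq_mul]
  rw [← e3, e2, mul_assoc, sg, Finset.sum_mul, map_sum, mul_assoc, Finset.sum_mul]
  congr 1
  refine Finset.sum_congr rfl fun a ha => ?_
  rw [Finset.mem_filter] at ha
  rw [mul_assoc, mul_assoc, sg, ih a.1 ha.2, hp]
  simp [psum]
  ring

theorem char_zero' (i : Fin N) :
    ∑ j ∈ range (N + 1), (-1 : MvPolynomial (Fin N) ℂ) ^ j * (esymm (Fin N) ℂ j * X i ^ (N - j)) = 0 := by
  have h := Multiset.prod_X_sub_X_eq_sum_esymm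
    ((univ : Finset (Fin N)).val.map (fun i => (X i : MvPolynomial (Fin N) ℂ)))
  have h2 := congrArg (Polynomial.eval (X i)) h
  simp only [Multiset.map_map, Function.comp_def, Multiset.card_map] at h2
  have h3 : (Multiset.map (fun x => (Polynomial.X : Polynomial (MvPolynomial (Fin N) ℂ)) - Polynomial.C (X x)) (univ : Finset (Fin N)).val).prod
    = ∏ x : Fin N, (Polynomial.X - Polynomial.C (X x)) := rfl
  rw [h3, Polynomial.eval_prod, Finset.prod_eq_zero (mem_univ i) (by simp)] at h2
  simp only [Polynomial.eval_finsetSum, Polynomial.eval_mul, Polynomial.eval_pow,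
    Polynomial.eval_neg, Polynomial.eval_one, Polynomial.eval_C, Polynomial.eval_X] at h2
  rw [h2]
  have : Multiset.card (univ : Finset (Fin N)).val = N := by simp
  rw [this]
  refine Finset.sum_congr rfl fun j _ => ?_
  rw [esymm_eq_multiset_esymm]

/-- staircase exponent -/
noncomputable def stair (N : ℕ) : Fin N →₀ ℕ := Finsupp.equivFunOnFinite.symm (fun i => (i : ℕ))

theorem uniq (y : Fin N → ℂ) (Θ : ℕ → MvPolynomial (Fin N) ℂ)
    (hp : ∀ n k, ∑ i, (pderiv i)^[k] (Θ (n + k)) = C (∑ i, y i ^ k) * Θ n)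
    (hom : ∀ n, (Θ n).IsHomogeneous n)
    (anti : ∀ (σ : Equiv.Perm (Fin N)) n,
      rename σ (Θ n) = C (((Equiv.Perm.sign σ : ℤ) : ℂ)) * Θ n)
    (h0 : coeff (stair N) (Θ (stair N).degree) = 0) (n : ℕ) : Θ n = 0 := by
  set ℓ : MvPolynomial (Fin N) ℂ →ₗ[ℂ] ℂ :=
    (basisMonomials (Fin N) ℂ).constr ℂ (fun l => hfun (Θ l.degree) l) with hℓ
  have ℓm : ∀ l, ℓ (monomial l 1) = hfun (Θ l.degree) l := by
    intro l
    have := (basisMonomials (Fin N) ℂ).constr_basis ℂ (fun l => hfun (Θ l.degree) l) l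
    simpa [coe_basisMonomials] using this
  have hps : ∀ k q, ℓ (psum (Fin N) ℂ k * q) = (∑ i, y i ^ k) * ℓ q := by
    intro k q
    induction q using MvPolynomial.induction_on' with
    | monomial l a =>
      have : monomial l a = a • monomial l (1 : ℂ) := by rw [smul_monomial, smul_eq_mul, mul_one]
      rw [this, mul_smul_comm, map_smul, map_smul, smul_eq_mul, smul_eq_mul, mul_left_comm]
      congr 1
      rw [psum, Finset.sum_mul, map_sum, ℓm]
      have := congrArg (fun p => hfun p l) (hp l.degree k)
      have e : ∀ i, ℓ (X i ^ k * monomial l 1) = hfun ((pderiv i)^[k] (Θ (l.degree + k))) l := by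
        intro i
        rw [hfun_iter, X_pow_eq_monomial, monomial_mul, one_mul, ℓm, add_comm, map_add,
          Finsupp.degree_single]
      rw [Finset.sum_congr rfl fun i _ => e i]
      simp only [hfun, coeff_sum, coeff_C_mul, Finset.mul_sum] at this ⊢
      rw [this]
      ring
    | add p q h1 h2 => rw [mul_add, map_add, map_add, h1, h2, mul_add]
  have hes := good_esymm ℓ y hps
  have perm : ∀ (σ : Equiv.Perm (Fin N)) n l, coeff l (Θ n) = 0 → coeff (l.mapDomain σ) (Θ n) = 0 := by
    intro σ n l h
    have h1 := coeff_rename_mapDomain σ σ.injective (Θ n) l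
    rw [anti, coeff_C_mul, h] at h1
    rcases mul_eq_zero.1 h1 with h2 | h2
    · rcases Int.units_eq_one_or (Equiv.Perm.sign σ) with h3 | h3 <;> simp [h3] at h2
    · exact h2
  have main : ∀ d, ∀ l : Fin N →₀ ℕ, l.degree = d → ℓ (monomial l 1) = 0 := by
    intro d
    induction d using Nat.strong_induction_on with
    | _ d ih =>
    intro l hl
    by_cases hbig : ∃ i, N ≤ l i
    · obtain ⟨i, hi⟩ := hbig
      set l' := l - Finsupp.single i N with hl'
      have hll : l = l' + Finsupp.single i N := by
        rw [hl', tsub_add_cancel_of_le]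
        rw [Finsupp.single_le_iff]; exact hi
      have hc := congrArg (fun p => ℓ (p * monomial l' 1)) (char_zero' i)
      simp only [zero_mul, map_zero, Finset.sum_mul, map_sum] at hc
      rw [Finset.sum_range_succ'] at hc
      rw [Finset.sum_eq_zero] at hc
      · simp only [esymm_zero, pow_zero, one_mul, zero_add, Nat.sub_zero] at hc
        rwa [X_pow_eq_monomial, monomial_mul, one_mul, add_comm, ← hll] at hc
      · intro j hj
        have : ((-1) ^ (j + 1) * (esymm (Fin N) ℂ (j + 1) * X i ^ (N - (j + 1))) * monomial l' 1
          : MvPolynomial (Fin N) ℂ)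
          = ((-1 : ℂ) ^ (j + 1)) • (esymm (Fin N) ℂ (j + 1) *
            monomial (Finsupp.single i (N - (j+1)) + l') 1) := by
          rw [smul_eq_C_mul, X_pow_eq_monomial, mul_assoc, mul_assoc, monomial_mul]; simp
        rw [this, map_smul, hes, ih _ _ _ rfl]
        · simp
        · rw [← hl, hll, map_add, map_add, Finsupp.degree_single, Finsupp.degree_single]
          rw [Finset.mem_range] at hj
          omega
    · push Not at hbig
      rw [ℓm, hfun_eq_zero]
      by_cases hinj : Function.Injective l
      · let f : Fin N → Fin N := fun i => ⟨l i, hbig i⟩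
        have hf : Function.Injective f := fun a b h => hinj (by simpa [f] using h)
        let σ : Equiv.Perm (Fin N) := Equiv.ofBijective f (Finite.injective_iff_bijective.1 hf)
        have hs : l = (stair N).mapDomain σ.symm := by
          ext i
          have : i = σ.symm (σ i) := by simp
          conv_rhs => rw [this]
          rw [Finsupp.mapDomain_apply σ.symm.injective]
          simp [stair, σ, f]
        have hd : l.degree = (stair N).degree := by
          rw [hs, Finsupp.degree_mapDomain]
        rw [hd, hs]
        exact perm _ _ _ h0
      · rw [Function.Injective] at hinj
        push Not at hinj
        obtain ⟨a, b, hab, hne⟩ := hinj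
        have h1 := coeff_rename_mapDomain (Equiv.swap a b) (Equiv.swap a b).injective (Θ l.degree) l
        have hsw : l.mapDomain (Equiv.swap a b) = l := by
          ext i
          have : i = Equiv.swap a b (Equiv.swap a b i) := by simp
          conv_lhs => rw [this]
          rw [Finsupp.mapDomain_apply (Equiv.swap a b).injective]
          by_cases h1 : i = a
          · subst h1; simp [hab]
          · by_cases h2 : i = b
            · subst h2; simp [hab]
            · rw [Equiv.swap_apply_of_ne_of_ne h1 h2]
        rw [hsw, anti, coeff_C_mul, Equiv.Perm.sign_swap hne] at h1
        simp at h1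
        linear_combination (-1/2 : ℂ) * h1
  ext l
  by_cases hl : l.degree = n
  · have := main _ l rfl
    rw [ℓm, hfun_eq_zero, hl] at this
    simpa using this
  · rw [(hom n).coeff_eq_zero hl]; simp
end Uniq
end HCIZ
namespace HCIZ
open Finset MvPolynomial

section Mom
variable {N : ℕ} {A : Type*} [CommRing A] [Algebra ℂ A] (E : A →ₗ[ℂ] ℂ) (W : Matrix (Fin N) (Fin N) A)

/-- coefficientwise expectation -/
noncomputable def EH : MvPolynomial (Fin N) A →ₗ[ℂ] MvPolynomial (Fin N) ℂ where
  toFun p := ∑ α ∈ p.support, monomial α (E (coeff α p))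
  map_add' p q := by
    classical
    ext m
    simp only [coeff_sum, coeff_monomial, coeff_add, Finset.sum_ite_eq', mem_support_iff]
    by_cases h1 : coeff m p = 0 <;> by_cases h2 : coeff m q = 0 <;>
      by_cases h3 : coeff m p + coeff m q = 0 <;> simp_all [← map_add]
  map_smul' c p := by
    classical
    ext m
    simp only [coeff_sum, coeff_monomial, coeff_smul, Finset.sum_ite_eq', mem_support_iff,
      RingHom.id_apply]
    by_cases h1 : coeff m p = 0 <;> by_cases h3 : c • coeff m p = 0 <;> simp_all [← map_smul]

theorem coeff_EH (p : MvPolynomial (Fin N) A) (m : Fin N →₀ ℕ) :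
    coeff m (EH E p) = E (coeff m p) := by
  classical
  change coeff m (∑ α ∈ p.support, monomial α (E (coeff α p))) = _
  simp only [coeff_sum, coeff_monomial, Finset.sum_ite_eq', mem_support_iff]
  by_cases h1 : coeff m p = 0 <;> simp [h1]

theorem EH_monomial (m : Fin N →₀ ℕ) (a : A) : EH E (monomial m a) = monomial m (E a) := by
  classical
  ext n
  rw [coeff_EH, coeff_monomial, coeff_monomial]
  split_ifs <;> simp

theorem pderiv_EH (p : MvPolynomial (Fin N) A) (i : Fin N) :
    pderiv i (EH E p) = EH E (pderiv i p) := by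
  ext m
  rw [coeff_pderiv, coeff_EH, coeff_EH, coeff_pderiv]
  have : coeff (m + Finsupp.single i 1) p * ((m i : A) + 1)
      = (m i + 1) • coeff (m + Finsupp.single i 1) p := by
    rw [nsmul_eq_mul]; push_cast; ring
  rw [this, map_nsmul, nsmul_eq_mul]; push_cast; ring

theorem eval_EH (p : MvPolynomial (Fin N) A) (x : Fin N → ℂ) :
    eval x (EH E p) = E (eval (fun i => algebraMap ℂ A (x i)) p) := by
  induction p using MvPolynomial.induction_on' with
  | monomial m a =>
    rw [EH_monomial, eval_monomial, eval_monomial]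
    have : (m.prod fun i k => (algebraMap ℂ A (x i)) ^ k) = algebraMap ℂ A (m.prod fun i k => x i ^ k) := by
      simp [Finsupp.prod, map_prod]
    rw [this, mul_comm a, ← Algebra.smul_def, map_smul, smul_eq_mul, mul_comm]
  | add p q hp hq => rw [map_add, map_add, hp, hq, map_add, map_add]

theorem EH_hom (p : MvPolynomial (Fin N) A) (n : ℕ) (h : p.IsHomogeneous n) :
    (EH E p).IsHomogeneous n := by
  intro m hm
  rw [coeff_EH] at hm
  exact h fun h0 => hm (by rw [h0, map_zero])

/-- the linear form -/
noncomputable def LX : MvPolynomial (Fin N) A := ∑ l, C (W l l) * X l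

/-- moments -/
noncomputable def mom (n : ℕ) : A →ₗ[ℂ] MvPolynomial (Fin N) ℂ where
  toFun V := ((n.factorial : ℂ)⁻¹) • EH E (LX W ^ n * C V)
  map_add' V V' := by rw [map_add, mul_add, map_add, smul_add]
  map_smul' c V := by
    have : (C (c • V) : MvPolynomial (Fin N) A) = c • C V := by
      ext m; simp [coeff_C]
    rw [this, mul_smul_comm, map_smul, smul_comm, RingHom.id_apply]

theorem mom_apply (n : ℕ) (V : A) :
    mom E W n V = ((n.factorial : ℂ)⁻¹) • EH E (LX W ^ n * C V) := rfl

theorem eval_mom (n : ℕ) (V : A) (x : Fin N → ℂ) :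
    eval x (mom E W n V) = ((n.factorial : ℂ)⁻¹) * E ((∑ l, x l • W l l) ^ n * V) := by
  rw [mom_apply, smul_eval, eval_EH]
  congr 2
  simp [LX, Algebra.smul_def, mul_comm]

theorem mom_hom (n : ℕ) (V : A) : (mom E W n V).IsHomogeneous n := by
  rw [mom_apply, smul_eq_C_mul]
  have h1 : (LX W).IsHomogeneous 1 := by
    refine IsHomogeneous.sum _ _ _ fun l _ => ?_
    simpa using (isHomogeneous_C (Fin N) (W l l)).mul (isHomogeneous_X A l)
  have h2 := (h1.pow n).mul (isHomogeneous_C (Fin N) V)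
  have h3 := EH_hom E _ _ h2
  simpa using (isHomogeneous_C (Fin N) ((n.factorial : ℂ)⁻¹)).mul h3

theorem pderiv_LX (i : Fin N) : pderiv i (LX W) = C (W i i) := by
  simp [LX, Derivation.leibniz, pderiv_X, Pi.single_apply]

theorem mom_pderiv (n : ℕ) (V : A) (i : Fin N) :
    pderiv i (mom E W (n+1) V) = mom E W n (W i i * V) := by
  rw [mom_apply, mom_apply, Derivation.map_smul, pderiv_EH, Derivation.leibniz,
    Derivation.leibniz_pow, pderiv_LX, pderiv_C, smul_zero, zero_add]
  have : (C V : MvPolynomial (Fin N) A) • (n + 1) • (LX W ^ (n + 1 - 1)) • (C (W i i) : MvPolynomial (Fin N) A)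
      = ((n + 1 : ℕ) : ℂ) • (LX W ^ n * C (W i i * V)) := by
    simp only [smul_eq_mul, Nat.add_sub_cancel, map_mul, nsmul_eq_mul, Nat.cast_smul_eq_nsmul]
    ring
  rw [this, map_smul, smul_smul, Nat.factorial_succ]
  congr 1
  have : ((n + 1 : ℕ) : ℂ) ≠ 0 := Nat.cast_ne_zero.2 (Nat.succ_ne_zero n)
  have := Nat.cast_ne_zero (R := ℂ).2 (Nat.factorial_ne_zero n)
  push_cast at *
  field_simp

theorem mom_zero_pderiv (V : A) (i : Fin N) : pderiv i (mom E W 0 V) = 0 := by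
  rw [mom_apply, Derivation.map_smul, pderiv_EH]
  simp

end Mom

section Vand
variable {N : ℕ}

/-- Vandermonde polynomial -/
noncomputable def vand (N : ℕ) : MvPolynomial (Fin N) ℂ :=
  (Matrix.vandermonde (fun i : Fin N => (X i : MvPolynomial (Fin N) ℂ))).det

theorem eval_vand (x : Fin N → ℂ) : eval x (vand N) = (Matrix.vandermonde x).det := by
  rw [vand, RingHom.map_det]
  congr 1
  ext i j; simp [Matrix.vandermonde_apply]

theorem vand_expand : vand N = ∑ σ : Equiv.Perm (Fin N),
    C ((Equiv.Perm.sign σ : ℤ) : ℂ) * monomial ((stair N).mapDomain σ) 1 := by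
  rw [vand, Matrix.det_apply']
  refine Finset.sum_congr rfl fun σ _ => ?_
  congr 1
  simp only [Matrix.vandermonde_apply]
  rw [monomial_eq, Finsupp.prod_mapDomain_index_inj σ.injective, Finsupp.prod_fintype]
  · simp [stair]
  · simp

theorem stair_degree_mapDomain (σ : Equiv.Perm (Fin N)) :
    ((stair N).mapDomain σ).degree = (stair N).degree := by
  rw [Finsupp.degree_mapDomain]

theorem vand_hom : (vand N).IsHomogeneous (stair N).degree := by
  rw [vand_expand]
  refine IsHomogeneous.sum _ _ _ fun σ _ => ?_
  have := (isHomogeneous_C (Fin N) ((Equiv.Perm.sign σ : ℤ) : ℂ)).mul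
    (isHomogeneous_monomial (1 : ℂ) (stair_degree_mapDomain σ))
  simpa using this

theorem vand_coeff : coeff (stair N) (vand N) = 1 := by
  rw [vand_expand, coeff_sum, Finset.sum_eq_single 1]
  · simp
  · intro σ _ hσ
    rw [coeff_C_mul, coeff_monomial, if_neg, mul_zero]
    intro h
    apply hσ
    ext i
    have h2 := DFunLike.congr_fun h (σ i)
    rw [Finsupp.mapDomain_apply σ.injective] at h2
    simp [stair] at h2
    simp [Fin.ext_iff, ← h2]
  · simp

theorem vand_ne_zero : vand N ≠ 0 := fun h => by
  have := vand_coeff (N := N)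
  simp [h] at this

theorem vand_rename (σ : Equiv.Perm (Fin N)) :
    rename σ (vand N) = C ((Equiv.Perm.sign σ : ℤ) : ℂ) * vand N := by
  rw [vand, AlgHom.map_det]
  have : (rename σ).mapMatrix (Matrix.vandermonde (fun i : Fin N => (X i : MvPolynomial (Fin N) ℂ)))
    = (Matrix.vandermonde (fun i : Fin N => (X i : MvPolynomial (Fin N) ℂ))).submatrix σ id := by
    ext1 i j; simp [Matrix.vandermonde_apply]
  rw [this, Matrix.det_permute]
  simp

theorem logder (i : Fin N) (x : Fin N → ℂ) {κ : Type*} (s : Finset κ)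
    (p : κ → MvPolynomial (Fin N) ℂ) (c : κ → ℂ)
    (h : ∀ a ∈ s, eval x (pderiv i (p a)) = eval x (p a) * c a) :
    eval x (pderiv i (∏ a ∈ s, p a)) = eval x (∏ a ∈ s, p a) * ∑ a ∈ s, c a := by
  classical
  induction s using Finset.induction_on with
  | empty => simp
  | insert a s ha ih =>
    rw [Finset.prod_insert ha, Finset.sum_insert ha, Derivation.leibniz]
    simp only [map_add, smul_eq_mul, map_mul]
    rw [ih fun b hb => h b (Finset.mem_insert_of_mem hb), h a (Finset.mem_insert_self a s)]
    simp only [map_prod]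
    ring

theorem vand_logder (i : Fin N) (x : Fin N → ℂ) (hx : Function.Injective x) :
    eval x (pderiv i (vand N)) = eval x (vand N) * ∑ j ∈ univ.erase i, (x i - x j)⁻¹ := by
  rw [vand, Matrix.det_vandermonde]
  rw [logder i x univ _ (fun a => ∑ b ∈ Ioi a, ((if b = i then 1 else 0) - (if a = i then 1 else 0)) *
    (x b - x a)⁻¹)]
  · congr 1
    simp only [sub_mul, Finset.sum_sub_distrib, ite_mul, one_mul, zero_mul]
    have e1 : ∑ a : Fin N, ∑ b ∈ Ioi a, (if b = i then (x b - x a)⁻¹ else 0)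
        = ∑ a ∈ Iio i, (x i - x a)⁻¹ := by
      have : ∀ a : Fin N, ∑ b ∈ Ioi a, (if b = i then (x b - x a)⁻¹ else 0)
          = if a ∈ Iio i then (x i - x a)⁻¹ else 0 := by
        intro a
        rw [Finset.sum_ite_eq']
        simp
      simp only [this]
      rw [← Finset.sum_filter]
      congr 1
      ext; simp
    have e2 : ∑ a : Fin N, ∑ b ∈ Ioi a, (if a = i then (x b - x a)⁻¹ else 0)
        = ∑ b ∈ Ioi i, (x b - x i)⁻¹ := by
      rw [Finset.sum_eq_single i]
      · simp
      · intro a _ ha; simp [ha]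
      · simp
    rw [e1, e2]
    have hdis : Disjoint (Iio i) (Ioi i) := by
      rw [Finset.disjoint_left]; intro a ha hb
      simp at ha hb; exact absurd ha (not_lt.2 hb.le)
    have hun : univ.erase i = (Iio i).disjUnion (Ioi i) hdis := by
      ext a; simp [lt_or_lt_iff_ne]
    rw [hun, Finset.sum_disjUnion, sub_eq_add_neg, ← Finset.sum_neg_distrib]
    congr 1
    refine Finset.sum_congr rfl fun b _ => ?_
    rw [← inv_neg, neg_sub]
  · intro a _
    refine logder i x _ _ _ fun b hb => ?_
    have : x b - x a ≠ 0 := sub_ne_zero.2 (hx.ne (by simpa using (Finset.mem_Ioi.1 hb).ne'))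
    simp only [map_sub, eval_X, pderiv_X, Pi.single_apply]
    rw [mul_comm, mul_assoc, inv_mul_cancel₀ this, mul_one]
    split_ifs <;> simp_all
end Vand
end HCIZ
namespace HCIZ
open Finset MvPolynomial

section Abs
variable {N : ℕ}

/-- exponential terms -/
noncomputable def pe (z : Fin N → ℂ) (n : ℕ) : MvPolynomial (Fin N) ℂ :=
  mom (A := ℂ) LinearMap.id (Matrix.diagonal z) n 1

theorem eval_pe (z : Fin N → ℂ) (n : ℕ) (x : Fin N → ℂ) :
    eval x (pe z n) = ((n.factorial : ℂ)⁻¹) * (∑ l, x l * z l) ^ n := by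
  rw [pe, eval_mom]; simp

theorem pderiv_pe (z : Fin N → ℂ) (n : ℕ) (i : Fin N) :
    pderiv i (pe z (n+1)) = C (z i) * pe z n := by
  rw [pe, mom_pderiv, pe, ← smul_eq_C_mul, ← map_smul]; simp

theorem pderiv_pe_iter (z : Fin N → ℂ) (n k : ℕ) (i : Fin N) :
    (pderiv i)^[k] (pe z (n+k)) = C (z i ^ k) * pe z n := by
  induction k generalizing n with
  | zero => simp
  | succ k ih =>
    rw [Function.iterate_succ_apply', show n + (k + 1) = (n + 1) + k by ring, ih, pderiv_C_mul,
      pderiv_pe, ← mul_assoc, ← C_mul, pow_succ]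

theorem hfun_C_mul (c : ℂ) (p : MvPolynomial (Fin N) ℂ) (l : Fin N →₀ ℕ) :
    hfun (C c * p) l = c * hfun p l := by
  unfold hfun; rw [coeff_C_mul]; ring

theorem hfun_pe (z : Fin N → ℂ) (l : Fin N →₀ ℕ) :
    hfun (pe z l.degree) l = ∏ i, z i ^ l i := by
  induction l using Finsupp.induction with
  | zero =>
    have : pe z 0 = 1 := MvPolynomial.funext fun x => by rw [eval_pe]; simp
    simp [hfun, this]
  | single_add a b f ha hb ih =>
    rw [add_comm, ← hfun_iter, map_add, Finsupp.degree_single, pderiv_pe_iter, hfun_C_mul, ih]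
    simp only [Finsupp.add_apply, pow_add, Finset.prod_mul_distrib]
    rw [mul_comm]
    congr 1
    rw [Finset.prod_eq_single a]
    · simp
    · intro j _ hj; simp [Finsupp.single_apply, hj.symm]
    · simp

theorem pe_hom (z : Fin N → ℂ) (n : ℕ) : (pe z n).IsHomogeneous n := mom_hom _ _ n 1

/-- antisymmetrised exponential -/
noncomputable def en (y : Fin N → ℂ) (n : ℕ) : MvPolynomial (Fin N) ℂ :=
  ∑ σ : Equiv.Perm (Fin N), C ((Equiv.Perm.sign σ : ℤ) : ℂ) * pe (y ∘ σ) n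

theorem en_hom (y : Fin N → ℂ) (n : ℕ) : (en y n).IsHomogeneous n := by
  refine IsHomogeneous.sum _ _ _ fun σ _ => ?_
  simpa using (isHomogeneous_C (Fin N) ((Equiv.Perm.sign σ : ℤ) : ℂ)).mul
    (pe_hom (y ∘ σ) n)

theorem iter_add (i : Fin N) (k : ℕ) (p q : MvPolynomial (Fin N) ℂ) :
    (pderiv i)^[k] (p + q) = (pderiv i)^[k] p + (pderiv i)^[k] q := iterate_map_add _ _ _ _

theorem iter_C_mul (i : Fin N) (k : ℕ) (c : ℂ) (p : MvPolynomial (Fin N) ℂ) :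
    (pderiv i)^[k] (C c * p) = C c * (pderiv i)^[k] p := by
  induction k generalizing p with
  | zero => rfl
  | succ k ih => rw [Function.iterate_succ_apply, pderiv_C_mul, ih, Function.iterate_succ_apply]

theorem iter_sum (i : Fin N) (k : ℕ) {κ : Type*} (s : Finset κ) (p : κ → MvPolynomial (Fin N) ℂ) :
    (pderiv i)^[k] (∑ a ∈ s, p a) = ∑ a ∈ s, (pderiv i)^[k] (p a) := by
  classical
  induction s using Finset.induction_on with
  | empty => simp [iterate_map_zero]
  | insert a s ha ih => rw [Finset.sum_insert ha, iter_add, ih, Finset.sum_insert ha]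

theorem en_p (y : Fin N → ℂ) (n k : ℕ) :
    ∑ i, (pderiv i)^[k] (en y (n + k)) = C (∑ i, y i ^ k) * en y n := by
  simp only [en, iter_sum, iter_C_mul, pderiv_pe_iter]
  rw [Finset.sum_comm, Finset.mul_sum]
  refine Finset.sum_congr rfl fun σ _ => ?_
  rw [← Finset.mul_sum, ← Finset.sum_mul, ← map_sum]
  have : ∑ i, (y ∘ σ) i ^ k = ∑ i, y i ^ k := Equiv.sum_comp σ (fun i => y i ^ k)
  rw [this]; ring

theorem en_anti (y : Fin N → ℂ) (τ : Equiv.Perm (Fin N)) (n : ℕ) :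
    rename τ (en y n) = C ((Equiv.Perm.sign τ : ℤ) : ℂ) * en y n := by
  refine MvPolynomial.funext fun x => ?_
  rw [eval_rename, map_mul, eval_C, en, map_sum, map_sum, Finset.mul_sum,
    ← Equiv.sum_comp (Equiv.mulRight τ)]
  refine Finset.sum_congr rfl fun σ _ => ?_
  rw [map_mul, map_mul, eval_pe, eval_pe, eval_C, eval_C]
  have : ∑ l, (x ∘ τ) l * (y ∘ (Equiv.mulRight τ σ : Equiv.Perm (Fin N))) l
    = ∑ l, x l * (y ∘ σ) l := by
    rw [← Equiv.sum_comp τ (fun l => x l * (y ∘ σ) l)]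
    simp
  rw [this]
  simp
  ring

theorem en_stair (y : Fin N → ℂ) :
    hfun (en y (stair N).degree) (stair N) = (Matrix.vandermonde y).det := by
  have : ∀ σ : Equiv.Perm (Fin N), hfun (C ((Equiv.Perm.sign σ : ℤ) : ℂ) * pe (y ∘ σ) (stair N).degree)
      (stair N) = ((Equiv.Perm.sign σ : ℤ) : ℂ) * ∏ i, y (σ i) ^ (i : ℕ) := by
    intro σ
    rw [hfun_C_mul, hfun_pe]; simp [stair]
  rw [Matrix.det_apply']
  simp only [Matrix.vandermonde_apply, ← this]
  simp only [hfun, en, coeff_sum, Finset.mul_sum]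

variable {A : Type*} [CommRing A] [Algebra ℂ A] (E : A →ₗ[ℂ] ℂ) (W : Matrix (Fin N) (Fin N) A)

/-- shifted moments -/
noncomputable def Mm (n : ℕ) : A →ₗ[ℂ] MvPolynomial (Fin N) ℂ :=
  if n < (stair N).degree then 0 else mom E W (n - (stair N).degree)

theorem Mm_lt {n : ℕ} (h : n < (stair N).degree) : Mm E W n = 0 := if_pos h
theorem Mm_add (n : ℕ) : Mm E W (n + (stair N).degree) = mom E W n := by
  rw [Mm, if_neg (by omega), Nat.add_sub_cancel]

theorem split_cases (P : ℕ → Prop) (d : ℕ) (h1 : ∀ n, n + 1 < d → P n) (h2 : ∀ n, n + 1 = d → P n)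
    (h3 : ∀ n, P (n + d)) (n : ℕ) : P n := by
  rcases lt_trichotomy (n + 1) d with h | h | h
  · exact h1 n h
  · exact h2 n h
  · obtain ⟨k, rfl⟩ := Nat.exists_eq_add_of_le' (Nat.lt_succ_iff.1 h)
    exact h3 k

theorem mom_zero (V : A) : mom E W 0 V = C (E V) :=
  MvPolynomial.funext fun x => by rw [eval_mom]; simp

theorem C_mul_hom (c : ℂ) (p : MvPolynomial (Fin N) ℂ) (n : ℕ) (h : p.IsHomogeneous n) :
    (C c * p).IsHomogeneous n := by
  simpa using (isHomogeneous_C (Fin N) c).mul h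

theorem abs_main (y : Fin N → ℂ) (hE1 : E 1 = 1)
    (hSD0 : ∀ i j, i ≠ j → ∀ k, E ((W^k) i i - (W^k) j j) = 0)
    (hSD : ∀ (x : Fin N → ℂ) i j, i ≠ j → ∀ n k : ℕ,
      ((n : ℂ) + 1) * (x i - x j) * E ((∑ l, x l • W l l) ^ n * ((W^k) i j * W j i))
        = E ((∑ l, x l • W l l) ^ (n+1) * ((W^k) i i - (W^k) j j)))
    (hsym : ∀ (x : Fin N → ℂ) (σ : Equiv.Perm (Fin N)) (n : ℕ),
      E ((∑ l, x (σ l) • W l l) ^ n) = E ((∑ l, x l • W l l) ^ n))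
    (htr : ∀ k, ∑ i, (W^k) i i = algebraMap ℂ A (∑ i, y i ^ k)) (n : ℕ) :
    C (Matrix.vandermonde y).det * (vand N * Mm E W n 1)
      = C (∏ i : Fin N, ((i : ℕ).factorial : ℂ)) * en y n := by
  have hD : ∀ i n V, pderiv i (Mm E W (n+1) V) = Mm E W n (W i i * V) := by
    intro i n V
    refine split_cases (fun n => pderiv i (Mm E W (n+1) V) = Mm E W n (W i i * V))
      (stair N).degree (fun n h => ?_) (fun n h => ?_) (fun n => ?_) n
    · rw [Mm_lt _ _ h, Mm_lt _ _ (by omega)]; simp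
    · rw [Mm_lt (n := n) _ _ (by omega), show n + 1 = 0 + (stair N).degree by omega, Mm_add,
        mom_zero_pderiv]; simp
    · rw [Mm_add, show n + (stair N).degree + 1 = n + 1 + (stair N).degree by omega, Mm_add, mom_pderiv]
  have hSD' : ∀ i j, i ≠ j → ∀ n k, (X i - X j) * Mm E W n ((W^k) i j * W j i)
      = Mm E W (n+1) ((W^k) i i - (W^k) j j) := by
    intro i j hij n k
    refine split_cases (fun n => (X i - X j) * Mm E W n ((W^k) i j * W j i)
      = Mm E W (n+1) ((W^k) i i - (W^k) j j))
      (stair N).degree (fun n h => ?_) (fun n h => ?_) (fun n => ?_) n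
    · rw [Mm_lt _ _ h, Mm_lt _ _ (by omega)]; simp
    · rw [Mm_lt (n := n) _ _ (by omega), show n + 1 = 0 + (stair N).degree by omega, Mm_add,
        mom_zero, hSD0 i j hij]; simp
    · rw [Mm_add, show n + (stair N).degree + 1 = n + 1 + (stair N).degree by omega, Mm_add]
      refine MvPolynomial.funext fun x => ?_
      rw [map_mul, eval_mom, eval_mom, ← hSD x i j hij, map_sub, eval_X, eval_X, Nat.factorial_succ]
      have h1 : ((n : ℂ) + 1) ≠ 0 := by exact_mod_cast Nat.succ_ne_zero n
      have h2 := Nat.cast_ne_zero (R := ℂ).2 (Nat.factorial_ne_zero n)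
      push_cast
      field_simp
  have hB := finalB W (Mm E W) (vand N) hD hSD' (fun i x hx => vand_logder i x hx) vand_ne_zero
    (fun x hx => by
      rw [eval_vand]
      by_contra h
      exact hx (Matrix.det_vandermonde_ne_zero_iff.1 h)) y htr
  have key := uniq y (fun n => C (Matrix.vandermonde y).det * (vand N * Mm E W n 1)
      - C (∏ i : Fin N, ((i : ℕ).factorial : ℂ)) * en y n) ?_ ?_ ?_ ?_ n
  · exact sub_eq_zero.1 key
  · intro n k
    simp only [sub_eq_add_neg, iter_add, ← neg_mul, ← C_neg, iter_C_mul]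
    rw [Finset.sum_add_distrib, ← Finset.mul_sum, ← Finset.mul_sum, hB, en_p]
    ring
  · intro n
    refine IsHomogeneous.sub ?_ ?_
    · have : (vand N * Mm E W n 1).IsHomogeneous n := by
        rcases lt_or_ge n (stair N).degree with h | h
        · rw [Mm_lt _ _ h]; simpa using isHomogeneous_zero _ _ _
        · obtain ⟨k, rfl⟩ := Nat.exists_eq_add_of_le' h
          rw [Mm_add, add_comm]
          exact vand_hom.mul (mom_hom E W k 1)
      exact C_mul_hom _ _ _ this
    · exact C_mul_hom _ _ _ (en_hom y n)
  · intro σ n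
    have : rename σ (Mm E W n 1) = Mm E W n 1 := by
      rcases lt_or_ge n (stair N).degree with h | h
      · rw [Mm_lt _ _ h]; simp
      · obtain ⟨k, rfl⟩ := Nat.exists_eq_add_of_le' h
        rw [Mm_add]
        refine MvPolynomial.funext fun x => ?_
        rw [eval_rename, eval_mom, eval_mom, mul_one, mul_one, ← hsym x σ k]
        rfl
    simp only [map_sub, map_mul, rename_C, this, vand_rename, en_anti]
    generalize (C (Equiv.Perm.sign σ : ℤ) : MvPolynomial (Fin N) ℂ) = s
    generalize (C (Matrix.vandermonde y).det : MvPolynomial (Fin N) ℂ) = u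
    generalize (C _ : MvPolynomial (Fin N) ℂ) = v
    ring
  · have h1 : Mm E W (stair N).degree 1 = 1 := by
      have := Mm_add E W 0
      rw [zero_add] at this
      rw [this, mom_zero, hE1, C_1]
    have h2 := en_stair y
    simp only [coeff_sub, coeff_C_mul, h1, mul_one, vand_coeff]
    rw [← h2, hfun]
    simp [stair]

theorem abs_eval (y : Fin N → ℂ) (hE1 : E 1 = 1)
    (hSD0 : ∀ i j, i ≠ j → ∀ k, E ((W^k) i i - (W^k) j j) = 0)
    (hSD : ∀ (x : Fin N → ℂ) i j, i ≠ j → ∀ n k : ℕ,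
      ((n : ℂ) + 1) * (x i - x j) * E ((∑ l, x l • W l l) ^ n * ((W^k) i j * W j i))
        = E ((∑ l, x l • W l l) ^ (n+1) * ((W^k) i i - (W^k) j j)))
    (hsym : ∀ (x : Fin N → ℂ) (σ : Equiv.Perm (Fin N)) (n : ℕ),
      E ((∑ l, x (σ l) • W l l) ^ n) = E ((∑ l, x l • W l l) ^ n))
    (htr : ∀ k, ∑ i, (W^k) i i = algebraMap ℂ A (∑ i, y i ^ k)) (x : Fin N → ℂ) :
    (∀ n, (Matrix.vandermonde y).det * ((Matrix.vandermonde x).det *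
        ((n.factorial : ℂ)⁻¹ * E ((∑ l, x l • W l l) ^ n)))
      = (∏ i : Fin N, ((i : ℕ).factorial : ℂ)) * ∑ σ : Equiv.Perm (Fin N),
        ((Equiv.Perm.sign σ : ℤ) : ℂ) * (((n + (stair N).degree).factorial : ℂ)⁻¹ *
          (∑ l, x l * y (σ l)) ^ (n + (stair N).degree))) ∧
    (∀ n < (stair N).degree, (∏ i : Fin N, ((i : ℕ).factorial : ℂ)) * ∑ σ : Equiv.Perm (Fin N),
        ((Equiv.Perm.sign σ : ℤ) : ℂ) * ((n.factorial : ℂ)⁻¹ *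
          (∑ l, x l * y (σ l)) ^ n) = 0) := by
  have h := fun n => congrArg (eval x) (abs_main E W y hE1 hSD0 hSD hsym htr n)
  simp only [map_mul, eval_C, en, map_sum, eval_pe, eval_vand, Function.comp_apply] at h
  constructor
  · intro n
    rw [← h, Mm_add, eval_mom, mul_one]
  · intro n hn
    rw [← h, Mm_lt _ _ hn]; simp

end Abs
end HCIZ
namespace HCIZ
open Finset

section SD
variable {N : ℕ}

theorem one_param (K : Matrix (Fin N) (Fin N) ℂ) (hK : star K = -K) :
    ∃ g : ℝ → Matrix.unitaryGroup (Fin N) ℂ, g 0 = 1 ∧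
      ∀ a b, HasDerivAt (fun t => (g t : Matrix (Fin N) (Fin N) ℂ) a b) (K a b) 0 := by
  have cs : ContinuousStar (Matrix (Fin N) (Fin N) ℂ) := inferInstance
  letI : NormedRing (Matrix (Fin N) (Fin N) ℂ) := Matrix.linftyOpNormedRing
  letI : NormedAlgebra ℝ (Matrix (Fin N) (Fin N) ℂ) := Matrix.linftyOpNormedAlgebra
  letI : NormedAlgebra ℂ (Matrix (Fin N) (Fin N) ℂ) := Matrix.linftyOpNormedAlgebra
  letI : NormedAlgebra ℚ (Matrix (Fin N) (Fin N) ℂ) := NormedAlgebra.restrictScalars ℚ ℝ _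
  have hs : ∀ t : ℝ, t • K ∈ skewAdjoint (Matrix (Fin N) (Fin N) ℂ) := by
    intro t
    rw [skewAdjoint.mem_iff, star_smul, hK]; simp
  refine ⟨fun t => ⟨NormedSpace.exp (t • K), @NormedSpace.exp_mem_unitary_of_mem_skewAdjoint _ _ _ _ _ cs _ (hs t)⟩,
    ?_, ?_⟩
  · ext1; simp
  · intro a b
    have h := hasDerivAt_exp_smul_const (𝕂 := ℝ) K 0
    rw [zero_smul, NormedSpace.exp_zero, one_mul] at h
    let ev : Matrix (Fin N) (Fin N) ℂ →L[ℝ] ℂ :=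
      LinearMap.toContinuousLinearMap (Matrix.entryLinearMap ℝ ℂ a b)
    exact ev.hasFDerivAt.comp_hasDerivAt (0 : ℝ) h

variable {A : Type*} [NormedCommRing A] [NormedAlgebra ℂ A]

/-- scalar matrices -/
noncomputable def hat (A : Type*) [NormedCommRing A] [NormedAlgebra ℂ A]
    (K : Matrix (Fin N) (Fin N) ℂ) : Matrix (Fin N) (Fin N) A :=
  (algebraMap ℂ A).mapMatrix K

/-- commutator -/
noncomputable def dl (K : Matrix (Fin N) (Fin N) ℂ) (V : Matrix (Fin N) (Fin N) A) :
    Matrix (Fin N) (Fin N) A := hat A K * V - V * hat A K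

theorem dl_apply (K : Matrix (Fin N) (Fin N) ℂ) (V : Matrix (Fin N) (Fin N) A) (a b : Fin N) :
    dl K V a b = ∑ p, K a p • V p b - ∑ p, K p b • V a p := by
  simp [dl, hat, Matrix.mul_apply, Algebra.smul_def, mul_comm]

theorem conj_apply (g : Matrix (Fin N) (Fin N) ℂ) (V : Matrix (Fin N) (Fin N) A) (a b : Fin N) :
    (hat A g * V * hat A (star g)) a b = ∑ p, ∑ q, (g a q * star (g b p)) • V q p := by
  simp only [hat, Matrix.mul_apply, Algebra.smul_def, Finset.sum_mul, map_mul,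
    RingHom.mapMatrix_apply, Matrix.map_apply, Matrix.star_apply]
  refine Finset.sum_congr rfl fun p _ => Finset.sum_congr rfl fun q _ => ?_
  ring

theorem conj_deriv (K : Matrix (Fin N) (Fin N) ℂ) (hK : star K = -K)
    (g : ℝ → Matrix (Fin N) (Fin N) ℂ) (h0 : g 0 = 1)
    (hg : ∀ a b, HasDerivAt (fun t => g t a b) (K a b) 0) (V : Matrix (Fin N) (Fin N) A)
    (a b : Fin N) :
    HasDerivAt (fun t => (hat A (g t) * V * hat A (star (g t))) a b) (dl K V a b) 0 := by
  simp only [conj_apply]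
  have h : ∀ p q, HasDerivAt (fun t => (g t a q * star (g t b p)) • V q p)
      ((K a q * star (g 0 b p) + g 0 a q * star (K b p)) • V q p) 0 := fun p q =>
    ((hg a q).mul (hg b p).star).smul_const (V q p)
  refine (HasDerivAt.fun_sum fun p _ => HasDerivAt.fun_sum fun q _ => h p q).congr_deriv ?_
  rw [dl_apply, h0]
  have hKs : ∀ p, star (K b p) = - K p b := fun p => by
    have := congrFun (congrFun hK p) b
    simpa [Matrix.star_apply] using this
  simp only [hKs, add_smul, Finset.sum_add_distrib, sub_eq_add_neg, ← Finset.sum_neg_distrib]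
  congr 1
  · rw [Finset.sum_comm]
    refine Finset.sum_congr rfl fun q _ => ?_
    rw [Finset.sum_eq_single b]
    · simp
    · intro p _ hp; simp [Matrix.one_apply, hp.symm]
    · simp
  · refine Finset.sum_congr rfl fun p _ => ?_
    rw [Finset.sum_eq_single a]
    · simp
    · intro q _ hq; simp [Matrix.one_apply, hq.symm]
    · simp

variable (E : A →L[ℂ] ℂ) (T : Matrix.unitaryGroup (Fin N) ℂ → A →ₐ[ℂ] A)
  (W : Matrix (Fin N) (Fin N) A)

theorem T_pow (hW : ∀ g, (T g).mapMatrix W = hat A (g : Matrix (Fin N) (Fin N) ℂ) * W *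
      hat A (star (g : Matrix (Fin N) (Fin N) ℂ))) (g : Matrix.unitaryGroup (Fin N) ℂ) (k : ℕ) :
    (T g).mapMatrix (W ^ k) = hat A (g : Matrix (Fin N) (Fin N) ℂ) * W ^ k *
      hat A (star (g : Matrix (Fin N) (Fin N) ℂ)) := by
  have h1 : hat A (g : Matrix (Fin N) (Fin N) ℂ) * hat A (star (g : Matrix (Fin N) (Fin N) ℂ)) = 1 := by
    rw [hat, hat, ← map_mul, Matrix.mem_unitaryGroup_iff.1 g.2, map_one]
  have h2 : hat A (star (g : Matrix (Fin N) (Fin N) ℂ)) * hat A (g : Matrix (Fin N) (Fin N) ℂ) = 1 := by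
    rw [hat, hat, ← map_mul, Matrix.mem_unitaryGroup_iff'.1 g.2, map_one]
  induction k with
  | zero => simp [h1]
  | succ k ih =>
    rw [pow_succ, map_mul, ih, hW]
    calc _ = hat A (g : Matrix (Fin N) (Fin N) ℂ) * W ^ k *
      (hat A (star (g : Matrix (Fin N) (Fin N) ℂ)) * hat A (g : Matrix (Fin N) (Fin N) ℂ)) * W *
        hat A (star (g : Matrix (Fin N) (Fin N) ℂ)) := by simp only [mul_assoc]
      _ = _ := by rw [h2, mul_one]; simp only [mul_assoc]

/-- the Schwinger-Dyson functional -/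
noncomputable def sdf (x : Fin N → ℂ) (n k : ℕ) (a b : Fin N) (K : Matrix (Fin N) (Fin N) ℂ) : A :=
  (n : A) * (∑ l, x l • W l l) ^ (n - 1) * (∑ l, x l • dl K W l l) * (W ^ k) a b +
    (∑ l, x l • W l l) ^ n * dl K (W ^ k) a b

theorem sdf_skew
    (hE : ∀ g a, E (T g a) = E a)
    (hW : ∀ g, (T g).mapMatrix W = hat A (g : Matrix (Fin N) (Fin N) ℂ) * W *
      hat A (star (g : Matrix (Fin N) (Fin N) ℂ)))
    (x : Fin N → ℂ) (n k : ℕ) (a b : Fin N) (K : Matrix (Fin N) (Fin N) ℂ) (hK : star K = -K) :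
    E (sdf W x n k a b K) = 0 := by
  obtain ⟨g, g0, hg⟩ := one_param K hK
  have h0 : ((g 0 : Matrix.unitaryGroup (Fin N) ℂ) : Matrix (Fin N) (Fin N) ℂ) = 1 := by rw [g0]; rfl
  have hc := fun V a b => conj_deriv (A := A) K hK (fun t => (g t : Matrix (Fin N) (Fin N) ℂ)) h0 hg V a b
  have hL : HasDerivAt (fun t => ∑ l, x l • T (g t) (W l l)) (∑ l, x l • dl K W l l) 0 := by
    refine HasDerivAt.fun_sum fun l _ => ?_
    have := (hc W l l).const_smul (x l)
    refine this.congr_of_eventuallyEq (Filter.Eventually.of_forall fun t => ?_)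
    have := congrFun (congrFun (hW (g t)) l) l
    simp only [AlgHom.mapMatrix_apply, Matrix.map_apply] at this
    simp only [this, Pi.smul_apply]
  have hV : HasDerivAt (fun t => T (g t) ((W ^ k) a b)) (dl K (W^k) a b) 0 := by
    refine (hc (W^k) a b).congr_of_eventuallyEq (Filter.Eventually.of_forall fun t => ?_)
    have := congrFun (congrFun (T_pow T W hW (g t) k) a) b
    simpa only [AlgHom.mapMatrix_apply, Matrix.map_apply] using this
  have hT0 : ∀ V : Matrix (Fin N) (Fin N) A, hat A (g 0 : Matrix (Fin N) (Fin N) ℂ) * V *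
      hat A (star (g 0 : Matrix (Fin N) (Fin N) ℂ)) = V := by
    intro V; rw [h0]; simp [hat]
  have hT1 : ∀ l, T (g 0) (W l l) = W l l := fun l => by
    have := congrFun (congrFun (hW (g 0)) l) l
    rw [hT0] at this
    simpa only [AlgHom.mapMatrix_apply, Matrix.map_apply] using this
  have hT2 : T (g 0) ((W ^ k) a b) = (W ^ k) a b := by
    have := congrFun (congrFun (T_pow T W hW (g 0) k) a) b
    rw [hT0] at this
    simpa only [AlgHom.mapMatrix_apply, Matrix.map_apply] using this
  have hF := (hL.fun_pow n).fun_mul hV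
  have hEF := (E.restrictScalars ℝ).hasFDerivAt.comp_hasDerivAt (0 : ℝ) hF
  have hconst : (fun t => E ((∑ l, x l • T (g t) (W l l)) ^ n * T (g t) ((W ^ k) a b)))
      = fun _ => E ((∑ l, x l • W l l) ^ n * ((W ^ k) a b)) := by
    funext t
    have : T (g t) ((∑ l, x l • W l l) ^ n * ((W ^ k) a b))
        = (∑ l, x l • T (g t) (W l l)) ^ n * T (g t) ((W ^ k) a b) := by
      rw [map_mul, map_pow, map_sum]
      simp only [map_smul]
    rw [← this, hE]
  have h2 : HasDerivAt (fun t : ℝ => E ((∑ l, x l • T (g t) (W l l)) ^ n * T (g t) ((W ^ k) a b))) 0 0 := by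
    rw [hconst]; exact hasDerivAt_const _ _
  have h3 := hEF.unique h2
  simp only [hT1, hT2] at h3
  exact h3

theorem sdf_lin (x : Fin N → ℂ) (n k : ℕ) (a b : Fin N) (K K' : Matrix (Fin N) (Fin N) ℂ) (c : ℂ) :
    sdf W x n k a b (K + c • K') = sdf W x n k a b K + c • sdf W x n k a b K' := by
  have h : ∀ V : Matrix (Fin N) (Fin N) A, ∀ a b, dl (K + c • K') V a b = dl K V a b + c • dl K' V a b := by
    intro V a b
    simp only [dl_apply, Matrix.add_apply, Matrix.smul_apply, add_smul, Finset.sum_add_distrib,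
      smul_sub, Finset.smul_sum, smul_eq_mul, mul_smul]
    abel
  simp only [sdf, h, smul_add, Finset.sum_add_distrib]
  have : ∑ l, x l • c • dl K' W l l = c • ∑ l, x l • dl K' W l l := by
    rw [Finset.smul_sum]
    exact Finset.sum_congr rfl fun l _ => smul_comm _ _ _
  rw [this]
  simp only [Algebra.smul_def]
  ring

theorem sdf_all
    (hE : ∀ g a, E (T g a) = E a)
    (hW : ∀ g, (T g).mapMatrix W = hat A (g : Matrix (Fin N) (Fin N) ℂ) * W *
      hat A (star (g : Matrix (Fin N) (Fin N) ℂ)))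
    (x : Fin N → ℂ) (n k : ℕ) (a b : Fin N) (K : Matrix (Fin N) (Fin N) ℂ) :
    E (sdf W x n k a b K) = 0 := by
  have e : K = (2⁻¹ : ℂ) • (K - star K) + Complex.I • ((-(Complex.I * 2⁻¹)) • (K + star K)) := by
    rw [smul_smul, show Complex.I * (-(Complex.I * 2⁻¹)) = (2⁻¹ : ℂ) by
      rw [mul_neg, ← mul_assoc, Complex.I_mul_I]; ring, ← smul_add]
    rw [show K - star K + (K + star K) = (2 : ℂ) • K by rw [two_smul]; abel, smul_smul]
    norm_num
  rw [e, sdf_lin, map_add, map_smul, sdf_skew E T W hE hW, sdf_skew E T W hE hW]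
  · simp
  · rw [star_smul, star_add, star_star, ← neg_smul, add_comm]
    congr 1
    simp
  · rw [star_smul, star_sub, star_star, ← smul_neg, neg_sub]
    congr 1
    simp

theorem dl_single (i j : Fin N) (V : Matrix (Fin N) (Fin N) A) (a b : Fin N) :
    dl (Matrix.single i j 1) V a b = (if a = i then V j b else 0) - (if b = j then V a i else 0) := by
  rw [dl_apply]
  congr 1
  · rw [Finset.sum_eq_single j]
    · by_cases h : a = i
      · subst h; simp
      · simp [Matrix.single_apply, h, Ne.symm h]
    · intro p _ hp; simp [Matrix.single_apply, hp.symm]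
    · simp
  · rw [Finset.sum_eq_single i]
    · by_cases h : b = j
      · subst h; simp
      · simp [Matrix.single_apply, h, Ne.symm h]
    · intro p _ hp; simp [Matrix.single_apply, hp.symm]
    · simp

theorem SD_main
    (hE : ∀ g a, E (T g a) = E a)
    (hW : ∀ g, (T g).mapMatrix W = hat A (g : Matrix (Fin N) (Fin N) ℂ) * W *
      hat A (star (g : Matrix (Fin N) (Fin N) ℂ)))
    (x : Fin N → ℂ) (i j : Fin N) (hij : i ≠ j) (n k : ℕ) :
    (n : ℂ) * (x i - x j) * E ((∑ l, x l • W l l) ^ (n-1) * ((W^k) i j * W j i))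
        = E ((∑ l, x l • W l l) ^ n * ((W^k) i i - (W^k) j j)) := by
  have h := sdf_all E T W hE hW x n k i j (Matrix.single i j 1)
  rw [sdf, map_add] at h
  simp only [dl_single, if_true] at h
  have e1 : ∑ l, x l • ((if l = i then W j l else 0) - (if l = j then W l i else 0))
      = (x i - x j) • W j i := by
    simp only [smul_sub, Finset.sum_sub_distrib, smul_ite, smul_zero, Finset.sum_ite_eq',
      Finset.mem_univ, if_true, sub_smul]
  rw [e1] at h
  have e2 : (n : A) * (∑ l, x l • W l l) ^ (n - 1) * ((x i - x j) • W j i) * (W ^ k) i j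
      = ((n : ℂ) * (x i - x j)) • ((∑ l, x l • W l l) ^ (n-1) * ((W^k) i j * W j i)) := by
    simp only [Algebra.smul_def, map_mul, map_natCast]
    ring
  rw [e2, map_smul, smul_eq_mul] at h
  rw [eq_neg_of_add_eq_zero_left h, ← map_neg, ← mul_neg, neg_sub]

theorem sym_main
    (hE : ∀ g a, E (T g a) = E a)
    (hW : ∀ g, (T g).mapMatrix W = hat A (g : Matrix (Fin N) (Fin N) ℂ) * W *
      hat A (star (g : Matrix (Fin N) (Fin N) ℂ)))
    (x : Fin N → ℂ) (σ : Equiv.Perm (Fin N)) (n : ℕ) :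
    E ((∑ l, x (σ l) • W l l) ^ n) = E ((∑ l, x l • W l l) ^ n) := by
  let P : Matrix (Fin N) (Fin N) ℂ := Matrix.of fun a b => if σ b = a then 1 else 0
  have hP : P ∈ Matrix.unitaryGroup (Fin N) ℂ := by
    rw [Matrix.mem_unitaryGroup_iff']
    ext a b
    rw [Matrix.mul_apply, Finset.sum_eq_single (σ a)]
    · simp [P, Matrix.star_apply, Matrix.one_apply, eq_comm]
    · intro c _ hc; simp [P, Matrix.star_apply, hc.symm]
    · simp
  have h := hE ⟨P, hP⟩ ((∑ l, x l • W l l) ^ n)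
  rw [← h, map_pow (T _), map_sum (T _)]
  congr 2
  rw [← Equiv.sum_comp σ (fun l => T ⟨P, hP⟩ (x l • W l l))]
  refine Finset.sum_congr rfl fun l _ => ?_
  rw [map_smul]
  congr 1
  have := congrFun (congrFun (hW ⟨P, hP⟩) (σ l)) (σ l)
  simp only [AlgHom.mapMatrix_apply, Matrix.map_apply] at this
  rw [this, conj_apply, Finset.sum_eq_single l]
  · rw [Finset.sum_eq_single l]
    · simp [P]
    · intro c _ hc; simp [P, hc]
    · simp
  · intro c _ hc; simp [P, hc]
  · simp

end SD
end HCIZ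
namespace HCIZ
open Finset

section Fin1
variable {N : ℕ} {A : Type*} [NormedCommRing A] [NormedAlgebra ℂ A] [CompleteSpace A]
variable (E : A →L[ℂ] ℂ) (T : Matrix.unitaryGroup (Fin N) ℂ → A →ₐ[ℂ] A)
  (W : Matrix (Fin N) (Fin N) A)

theorem abs_exp (y : Fin N → ℂ) (hE1 : E 1 = 1)
    (hE : ∀ g a, E (T g a) = E a)
    (hW : ∀ g, (T g).mapMatrix W = hat A (g : Matrix (Fin N) (Fin N) ℂ) * W *
      hat A (star (g : Matrix (Fin N) (Fin N) ℂ)))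
    (htr : ∀ k, ∑ i, (W^k) i i = algebraMap ℂ A (∑ i, y i ^ k)) (x : Fin N → ℂ) :
    (Matrix.vandermonde y).det * ((Matrix.vandermonde x).det *
        E (NormedSpace.exp (∑ l, x l • W l l)))
      = (∏ i : Fin N, ((i : ℕ).factorial : ℂ)) *
        Matrix.det (Matrix.of fun i j => Complex.exp (y i * x j)) := by
  obtain ⟨h1, h2⟩ := abs_eval (E : A →ₗ[ℂ] ℂ) W y hE1
    (fun i j hij k => by
      have := SD_main E T W hE hW 0 i j hij 0 k
      simpa using this.symm)
    (fun x i j hij n k => by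
      have := SD_main E T W hE hW x i j hij (n+1) k
      rw [Nat.add_sub_cancel] at this
      push_cast at this
      exact this)
    (fun x σ n => sym_main E T W hE hW x σ n) htr x
  set L := ∑ l, x l • W l l with hL
  have s1 : HasSum (fun n : ℕ => ((n.factorial : ℂ)⁻¹ * E (L ^ n))) (E (NormedSpace.exp L)) := by
    have := E.hasSum (NormedSpace.exp_series_hasSum_exp' (𝕂 := ℂ) L)
    simpa using this
  have s2 := (s1.mul_left (Matrix.vandermonde x).det).mul_left (Matrix.vandermonde y).det
  have s3 : ∀ z : ℂ, HasSum (fun n : ℕ => (n.factorial : ℂ)⁻¹ * z ^ n) (Complex.exp z) := by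
    intro z
    have := NormedSpace.exp_series_hasSum_exp' (𝕂 := ℂ) z
    rw [← Complex.exp_eq_exp_ℂ] at this
    simpa using this
  have s4 := (hasSum_sum (s := univ) fun (σ : Equiv.Perm (Fin N)) _ =>
    (s3 (∑ l, x l * y (σ l))).mul_left ((Equiv.Perm.sign σ : ℤ) : ℂ)).mul_left
      (∏ i : Fin N, ((i : ℕ).factorial : ℂ))
  have s5 := (hasSum_nat_add_iff' (stair N).degree).2 s4
  rw [Finset.sum_eq_zero (fun n hn => h2 n (Finset.mem_range.1 hn)), sub_zero] at s5
  have e : (fun n : ℕ => (Matrix.vandermonde y).det * ((Matrix.vandermonde x).det *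
    ((n.factorial : ℂ)⁻¹ * E (L ^ n)))) = _ := funext h1
  rw [e] at s2
  rw [s2.unique s5, Matrix.det_apply']
  congr 1
  refine Finset.sum_congr rfl fun σ _ => ?_
  rw [Complex.exp_sum]
  simp [mul_comm]
end Fin1

section Conc
open MeasureTheory
variable {N : ℕ}

instance ucompact : CompactSpace (Matrix.unitaryGroup (Fin N) ℂ) := by
  refine isCompact_iff_compactSpace.1 ?_
  have hc : IsClosed ((Matrix.unitaryGroup (Fin N) ℂ : Submonoid _) : Set (Matrix (Fin N) (Fin N) ℂ)) :=
    isClosed_unitary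
  have hk : IsCompact (Set.univ.pi fun _ : Fin N => Set.univ.pi fun _ : Fin N =>
      Metric.closedBall (0 : ℂ) 1) :=
    isCompact_univ_pi fun _ => isCompact_univ_pi fun _ => isCompact_closedBall _ _
  refine hk.of_isClosed_subset hc fun U hU => ?_
  intro i _ j _
  simpa using entry_norm_bound_of_unitary hU i j

/-- expectation -/
noncomputable def Ex (m : Measure (Matrix.unitaryGroup (Fin N) ℂ)) [IsProbabilityMeasure m]
    [BorelSpace (Matrix.unitaryGroup (Fin N) ℂ)] :
    C(Matrix.unitaryGroup (Fin N) ℂ, ℂ) →L[ℂ] ℂ :=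
  LinearMap.mkContinuous
    { toFun := fun f => ∫ U, f U ∂m
      map_add' := fun f g => integral_add
        (f.continuous.integrable_of_hasCompactSupport (HasCompactSupport.of_compactSpace _))
        (g.continuous.integrable_of_hasCompactSupport (HasCompactSupport.of_compactSpace _))
      map_smul' := fun c f => integral_smul c _ } 1 (by
    intro f
    have := norm_integral_le_of_norm_le_const (μ := m) (f := fun U => f U) (C := ‖f‖)
      (Filter.Eventually.of_forall fun U => f.norm_coe_le_norm U)
    simpa using this)

/-- coordinates -/
noncomputable def Uh : Matrix (Fin N) (Fin N) C(Matrix.unitaryGroup (Fin N) ℂ, ℂ) :=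
  Matrix.of fun a b => ⟨fun U => (U : Matrix (Fin N) (Fin N) ℂ) a b,
    (continuous_apply b).comp ((continuous_apply a).comp continuous_subtype_val)⟩

/-- conjugate coordinates -/
noncomputable def Us : Matrix (Fin N) (Fin N) C(Matrix.unitaryGroup (Fin N) ℂ, ℂ) :=
  Matrix.of fun a b => ⟨fun U => star ((U : Matrix (Fin N) (Fin N) ℂ) b a),
    continuous_star.comp ((continuous_apply a).comp ((continuous_apply b).comp continuous_subtype_val))⟩

/-- evaluation -/
noncomputable def evm (U : Matrix.unitaryGroup (Fin N) ℂ) : C(Matrix.unitaryGroup (Fin N) ℂ, ℂ) →+* ℂ :=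
  Pi.evalRingHom _ U |>.comp (ContinuousMap.coeFnRingHom)

theorem ev_ext (V V' : Matrix (Fin N) (Fin N) C(Matrix.unitaryGroup (Fin N) ℂ, ℂ))
    (h : ∀ U, (evm U).mapMatrix V = (evm U).mapMatrix V') : V = V' := by
  ext a b U
  exact congrFun (congrFun (h U) a) b

theorem ev_Uh (U : Matrix.unitaryGroup (Fin N) ℂ) : (evm U).mapMatrix Uh = U.1 := rfl
theorem ev_Us (U : Matrix.unitaryGroup (Fin N) ℂ) : (evm U).mapMatrix Us = star U.1 := rfl
theorem ev_hat (U : Matrix.unitaryGroup (Fin N) ℂ) (K : Matrix (Fin N) (Fin N) ℂ) :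
    (evm U).mapMatrix (hat _ K) = K := by
  ext a b
  simp [hat, evm]

/-- left translation -/
noncomputable def Tr (g : Matrix.unitaryGroup (Fin N) ℂ) :
    C(Matrix.unitaryGroup (Fin N) ℂ, ℂ) →ₐ[ℂ] C(Matrix.unitaryGroup (Fin N) ℂ, ℂ) :=
  ContinuousMap.compRightAlgHom ℂ ℂ (ContinuousMap.mulLeft g)

theorem ev_Tr (U g : Matrix.unitaryGroup (Fin N) ℂ)
    (V : Matrix (Fin N) (Fin N) C(Matrix.unitaryGroup (Fin N) ℂ, ℂ)) :
    (evm U).mapMatrix ((Tr g).mapMatrix V) = (evm (g * U)).mapMatrix V := rfl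

/-- the random matrix -/
noncomputable def Wm (y : Fin N → ℂ) : Matrix (Fin N) (Fin N) C(Matrix.unitaryGroup (Fin N) ℂ, ℂ) :=
  Uh * hat _ (Matrix.diagonal y) * Us

theorem Wm_T (y : Fin N → ℂ) (g : Matrix.unitaryGroup (Fin N) ℂ) :
    (Tr g).mapMatrix (Wm y) = hat _ (g : Matrix (Fin N) (Fin N) ℂ) * Wm y *
      hat _ (star (g : Matrix (Fin N) (Fin N) ℂ)) := by
  refine ev_ext _ _ fun U => ?_
  rw [ev_Tr, map_mul, map_mul, ev_hat, ev_hat, Wm, map_mul, map_mul, map_mul, map_mul, ev_hat, ev_hat,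
    ev_Uh, ev_Us, ev_Uh, ev_Us]
  have : ((g * U : Matrix.unitaryGroup (Fin N) ℂ) : Matrix (Fin N) (Fin N) ℂ) = g.1 * U.1 := rfl
  rw [this, star_mul]
  simp only [mul_assoc]

theorem Wm_tr (y : Fin N → ℂ) (k : ℕ) :
    ∑ i, ((Wm y)^k) i i = algebraMap ℂ _ (∑ i, y i ^ k) := by
  ext U
  have h1 : (∑ i, ((Wm y)^k) i i) U = ((evm U).mapMatrix ((Wm y)^k)).trace := by
    rw [Matrix.trace, ContinuousMap.sum_apply]; rfl
  rw [h1, map_pow, Wm, map_mul, map_mul, ev_Uh, ev_Us, ev_hat]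
  have hU : star U.1 * U.1 = 1 := Matrix.mem_unitaryGroup_iff'.1 U.2
  have hU' : U.1 * star U.1 = 1 := Matrix.mem_unitaryGroup_iff.1 U.2
  have : ∀ k : ℕ, (U.1 * Matrix.diagonal y * star U.1) ^ k = U.1 * Matrix.diagonal y ^ k * star U.1 := by
    intro k
    induction k with
    | zero => simp [hU']
    | succ k ih =>
      rw [pow_succ, ih]
      calc _ = U.1 * Matrix.diagonal y ^ k * (star U.1 * U.1) * Matrix.diagonal y * star U.1 := by
            simp only [mul_assoc]
        _ = _ := by rw [hU, mul_one, pow_succ]; simp only [mul_assoc]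
  rw [this, Matrix.trace_mul_comm, ← mul_assoc, hU, one_mul, Matrix.diagonal_pow, Matrix.trace_diagonal]
  simp

theorem exp_apply (f : C(Matrix.unitaryGroup (Fin N) ℂ, ℂ)) (U : Matrix.unitaryGroup (Fin N) ℂ) :
    (NormedSpace.exp f) U = Complex.exp (f U) := by
  have h := NormedSpace.exp_series_hasSum_exp' (𝕂 := ℂ) f
  have h2 := (ContinuousMap.evalCLM ℂ U).hasSum h
  have h3 := NormedSpace.exp_series_hasSum_exp' (𝕂 := ℂ) (f U)
  rw [← Complex.exp_eq_exp_ℂ] at h3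
  refine h2.unique ?_
  simpa using h3

theorem conc (m : Measure (Matrix.unitaryGroup (Fin N) ℂ)) [IsProbabilityMeasure m]
    [BorelSpace (Matrix.unitaryGroup (Fin N) ℂ)] [m.IsMulLeftInvariant] (x y : Fin N → ℂ) :
    (Matrix.vandermonde y).det * ((Matrix.vandermonde x).det *
        ∫ U, Complex.exp (Matrix.trace (U.1 * Matrix.diagonal y * star U.1 * Matrix.diagonal x)) ∂m)
      = (∏ i : Fin N, ((i : ℕ).factorial : ℂ)) *
        Matrix.det (Matrix.of fun i j => Complex.exp (y i * x j)) := by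
  have h := abs_exp (Ex m) Tr (Wm y) y (by simp [Ex])
    (fun g f => integral_mul_left_eq_self (μ := m) (fun U => f U) g) (Wm_T y) (Wm_tr y) x
  rw [← h]
  congr 2
  change _ = ∫ U, (NormedSpace.exp (∑ l, x l • Wm y l l)) U ∂m
  refine integral_congr_ae (Filter.Eventually.of_forall fun U => ?_)
  simp only [exp_apply]
  congr 1
  rw [Matrix.trace, ContinuousMap.sum_apply]
  refine Finset.sum_congr rfl fun l _ => ?_
  have : U.1 * Matrix.diagonal y * star U.1 = (evm U).mapMatrix (Wm y) := by
    rw [Wm, map_mul, map_mul, ev_Uh, ev_Us, ev_hat]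
  rw [this, Matrix.diag_apply, Matrix.mul_diagonal, mul_comm]
  rfl
end Conc
end HCIZ
/-- **Harish-Chandra–Itzykson–Zuber formula.** For every `N` there is a constant `c_N > 0`
such that for all real diagonal matrices `C = diag c`, `D = diag d` with pairwise distinct
diagonal entries,
`∫_{U(N)} exp (N tr (U C U⋆ D)) dm_N(U)
  = c_N · det (exp (N c_i d_j)) / (∏_{i<j} (c_i - c_j) · ∏_{i<j} (d_i - d_j))`,
where `m_N` is the Haar probability measure on the unitary group. -/
theorem harish_chandra_itzykson_zuber (N : ℕ) (hN : 0 < N)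
    (m : Measure (Matrix.unitaryGroup (Fin N) ℂ))
    [m.IsHaarMeasure] [IsProbabilityMeasure m] :
    ∃ cN : ℝ, 0 < cN ∧ ∀ c d : Fin N → ℝ, Function.Injective c → Function.Injective d →
      (∫ U, Real.exp ((N : ℝ) * (Matrix.trace ((U : Matrix (Fin N) (Fin N) ℂ) *
            Matrix.diagonal (fun i => (c i : ℂ)) * star (U : Matrix (Fin N) (Fin N) ℂ) *
            Matrix.diagonal (fun i => (d i : ℂ)))).re) ∂m)
        = cN * Matrix.det (Matrix.of fun i j : Fin N => Real.exp ((N : ℝ) * c i * d j))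
          / ((∏ i : Fin N, ∏ j ∈ Finset.Ioi i, (c i - c j)) *
             (∏ i : Fin N, ∏ j ∈ Finset.Ioi i, (d i - d j))) := by
  classical
  haveI : BorelSpace (Matrix (Fin N) (Fin N) ℂ) := ⟨rfl⟩
  haveI : BorelSpace (Matrix.unitaryGroup (Fin N) ℂ) := Subtype.borelSpace _
  set Q : ℝ := ∏ i : Fin N, ∏ _j ∈ Finset.Ioi i, (N : ℝ) with hQ
  set P : ℝ := ∏ i : Fin N, ((i : ℕ).factorial : ℝ) with hP
  have hN' : (0 : ℝ) < N := by exact_mod_cast hN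
  have hQ0 : 0 < Q := Finset.prod_pos fun i _ => Finset.prod_pos fun j _ => hN'
  have hP0 : 0 < P := Finset.prod_pos fun i _ => by exact_mod_cast Nat.factorial_pos _
  refine ⟨P / Q, div_pos hP0 hQ0, fun c d hc hd => ?_⟩
  have key := HCIZ.conc m (fun i => (((N : ℝ) * d i : ℝ) : ℂ)) (fun i => ((c i : ℝ) : ℂ))
  set I : ℝ := ∫ U : Matrix.unitaryGroup (Fin N) ℂ,
    Real.exp ((N : ℝ) * (Matrix.trace ((U : Matrix (Fin N) (Fin N) ℂ) *
            Matrix.diagonal (fun i => (c i : ℂ)) * star (U : Matrix (Fin N) (Fin N) ℂ) *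
            Matrix.diagonal (fun i => (d i : ℂ)))).re) ∂m with hI
  have hint : ∫ U : Matrix.unitaryGroup (Fin N) ℂ, Complex.exp (Matrix.trace (U.1 *
      Matrix.diagonal (fun i => ((c i : ℝ) : ℂ)) * star U.1 *
      Matrix.diagonal (fun i => (((N : ℝ) * d i : ℝ) : ℂ)))) ∂m = (I : ℂ) := by
    rw [hI]; refine Eq.trans ?_ (integral_ofReal (𝕜 := ℂ))
    refine integral_congr_ae (Filter.Eventually.of_forall fun U => ?_)
    have hreal : Matrix.trace (U.1 * Matrix.diagonal (fun i => (c i : ℂ)) * star U.1 *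
        Matrix.diagonal (fun i => (d i : ℂ)))
        = ((∑ l, (∑ p, c p * Complex.normSq (U.1 l p)) * d l : ℝ) : ℂ) := by
      rw [Matrix.trace]
      push_cast
      refine Finset.sum_congr rfl fun l _ => ?_
      rw [Matrix.diag_apply, Matrix.mul_diagonal, Matrix.mul_apply]
      congr 1
      refine Finset.sum_congr rfl fun p _ => ?_
      rw [Matrix.mul_diagonal, Matrix.star_apply, Complex.normSq_eq_conj_mul_self]
      simp only [RCLike.star_def]
      ring
    have hdiag : Matrix.diagonal (fun i => (((N : ℝ) * d i : ℝ) : ℂ))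
        = ((N : ℝ) : ℂ) • Matrix.diagonal (fun i => (d i : ℂ)) := by
      rw [← Matrix.diagonal_smul]
      congr 1
      ext i
      simp
    simp only [hdiag, Matrix.mul_smul, Matrix.trace_smul, hreal, smul_eq_mul, Complex.ofReal_re]
    simp only [← Complex.ofReal_mul, ← Complex.ofReal_exp]
    rfl
  rw [hint] at key
  have key2 : (∏ i : Fin N, ∏ j ∈ Finset.Ioi i, (c j - c i)) *
      ((∏ i : Fin N, ∏ j ∈ Finset.Ioi i, ((N : ℝ) * d j - (N : ℝ) * d i)) * I)
      = P * Matrix.det (Matrix.of fun i j : Fin N => Real.exp ((N : ℝ) * c i * d j)) := by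
    have hdet : (((Matrix.det (Matrix.of fun i j : Fin N => Real.exp ((N : ℝ) * c i * d j)) : ℝ)) : ℂ)
        = Matrix.det (Matrix.of fun i j : Fin N =>
          Complex.exp (((c i : ℝ) : ℂ) * (((N : ℝ) * d j : ℝ) : ℂ))) := by
      have := RingHom.map_det Complex.ofRealHom
        (Matrix.of fun i j : Fin N => Real.exp ((N : ℝ) * c i * d j))
      refine this.trans ?_
      congr 1
      ext i j
      simp only [RingHom.mapMatrix_apply, Matrix.map_apply, Matrix.of_apply,
        Complex.ofRealHom_eq_coe, Complex.ofReal_exp]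
      congr 1
      push_cast
      ring
    apply Complex.ofReal_injective
    rw [Complex.ofReal_mul P, hdet]
    rw [Matrix.det_vandermonde, Matrix.det_vandermonde] at key
    rw [hP]
    push_cast at key ⊢
    exact key
  have flip : ∀ f : Fin N → ℝ, (∏ i : Fin N, ∏ j ∈ Finset.Ioi i, (f j - f i))
      = (∏ i : Fin N, ∏ _j ∈ Finset.Ioi i, (-1 : ℝ)) * ∏ i : Fin N, ∏ j ∈ Finset.Ioi i, (f i - f j) := by
    intro f
    simp only [← Finset.prod_mul_distrib]
    refine Finset.prod_congr rfl fun i _ => Finset.prod_congr rfl fun j _ => ?_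
    ring
  have hs : (∏ i : Fin N, ∏ _j ∈ Finset.Ioi i, (-1 : ℝ)) * (∏ i : Fin N, ∏ _j ∈ Finset.Ioi i, (-1 : ℝ)) = 1 := by
    simp only [← Finset.prod_mul_distrib]
    simp
  have hNd : (∏ i : Fin N, ∏ j ∈ Finset.Ioi i, ((N : ℝ) * d j - (N : ℝ) * d i))
      = Q * ∏ i : Fin N, ∏ j ∈ Finset.Ioi i, (d j - d i) := by
    simp only [hQ, ← Finset.prod_mul_distrib, mul_sub]
  have nz : ∀ f : Fin N → ℝ, Function.Injective f →
      (∏ i : Fin N, ∏ j ∈ Finset.Ioi i, (f i - f j)) ≠ 0 := fun f hf =>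
    Finset.prod_ne_zero_iff.2 fun i _ => Finset.prod_ne_zero_iff.2 fun j hj =>
      sub_ne_zero.2 (hf.ne (Finset.mem_Ioi.1 hj).ne)
  have nc := nz c hc
  have nd := nz d hd
  rw [hNd, flip c, flip d] at key2
  rw [eq_div_iff (mul_ne_zero nc nd), div_mul_eq_mul_div, eq_div_iff hQ0.ne', ← key2]
  generalize (∏ i : Fin N, ∏ j ∈ Finset.Ioi i, (c i - c j)) = u at *
  generalize (∏ i : Fin N, ∏ j ∈ Finset.Ioi i, (d i - d j)) = v at *
  generalize (∏ i : Fin N, ∏ _j ∈ Finset.Ioi i, (-1 : ℝ)) = s at *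
  linear_combination (-(u * v * Q * I)) * hs
end
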